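/- arXiv:1702.07104 — 3 statements merged into one kernel-verified Lean document; each statement's English description precedes it below -/
import Mathlib

section
/- For every n ≥ 0, the restriction map in group cohomology H^n(Ad(Q_W), ℚ) → H^n(C_W, ℚ) (trivial coefficients) induced by the inclusion C_W ↪ Ad(Q_W) is an isomorphism; consequently H^*(Ad(Q_W), ℚ) is isomorphic to an exterior ℚ-algebra on c(W) generators of degree 1. -/
open Quandles Rack CoxeterSystem

variable {B : Type} [Fintype B] {W : Type} [Group W] {M : CoxeterMatrix B}

/-- The Coxeter quandle `Q_W`: the set of reflections of `W`, with operation given by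
conjugation. (Since reflections are involutions, `x ◃ y = x y x⁻¹ = x⁻¹ y x`.) -/
def CoxeterQuandle (cs : CoxeterSystem M W) : Type := {w : W // cs.IsReflection w}

instance (cs : CoxeterSystem M W) : Quandle (CoxeterQuandle cs) where
  act x y := ⟨x.1 * y.1 * x.1⁻¹, y.2.conj x.1⟩
  self_distrib := by
    rintro ⟨x, _⟩ ⟨y, _⟩ ⟨z, _⟩
    apply Subtype.ext
    show x * (y * z * y⁻¹) * x⁻¹ = (x * y * x⁻¹) * (x * z * x⁻¹) * (x * y * x⁻¹)⁻¹
    group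
  invAct x y := ⟨x.1⁻¹ * y.1 * x.1, by simpa using y.2.conj x.1⁻¹⟩
  left_inv := by
    rintro ⟨x, _⟩ ⟨y, _⟩
    apply Subtype.ext
    show x⁻¹ * (x * y * x⁻¹) * x = y
    group
  right_inv := by
    rintro ⟨x, _⟩ ⟨y, _⟩
    apply Subtype.ext
    show x * (x⁻¹ * y * x) * x⁻¹ = y
    group
  fix := by
    rintro ⟨x, hx⟩
    apply Subtype.ext
    show x * x * x⁻¹ = x
    group

/-- The canonical generator `e_x` of the adjoint (enveloping) group `Ad(Q_W)` of the
Coxeter quandle, associated with the reflection `x`. -/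
def coxE (cs : CoxeterSystem M W) (x : CoxeterQuandle cs) :
    EnvelGroup (CoxeterQuandle cs) :=
  Rack.toEnvelGroup (CoxeterQuandle cs) x

open groupCohomology

/-- Restriction of inhomogeneous cochains (with trivial `ℚ`-coefficients) along a group
homomorphism `f : H →* G`, given in degree `n` by precomposition with `f`. -/
noncomputable def cochainsRes {G H : Type} [Group G] [Group H] (f : H →* G) :
    inhomogeneousCochains (Rep.trivial ℚ G ℚ) ⟶ inhomogeneousCochains (Rep.trivial ℚ H ℚ) where
  f n :=
    (ModuleCat.ofHom
     ({ toFun := fun φ g => φ (fun i => f (g i))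
        map_add' := fun _ _ => rfl
        map_smul' := fun _ _ => rfl } :
      ((Fin n → G) → ℚ) →ₗ[ℚ] ((Fin n → H) → ℚ)) :
      (inhomogeneousCochains (Rep.trivial ℚ G ℚ)).X n ⟶
        (inhomogeneousCochains (Rep.trivial ℚ H ℚ)).X n)
  comm' := by
    rintro i j (rfl : i + 1 = j)
    rw [inhomogeneousCochains.d_def, inhomogeneousCochains.d_def]
    refine ModuleCat.hom_ext <| LinearMap.ext fun φ => funext fun g => ?_
    show (inhomogeneousCochains.d (Rep.trivial ℚ H ℚ) i).hom (fun g' => φ fun k => f (g' k)) g =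
      (inhomogeneousCochains.d (Rep.trivial ℚ G ℚ) i).hom φ (fun k => f (g k))
    simp only [inhomogeneousCochains.d_hom_apply]
    have hc : ∀ j : Fin (i + 1), (fun k => f (Fin.contractNth j (· * ·) g k)) =
        Fin.contractNth j (· * ·) (fun k => f (g k)) := by
      intro j
      funext k
      unfold Fin.contractNth
      split_ifs <;> simp [map_mul]
    congr 1
    refine Finset.sum_congr rfl fun j _ => ?_
    rw [hc]

/-!
`Ad(Q_W)` is a central extension of `W` by `C_W = ker φ`. Restriction to `C_W` is an isomorphism as
soon as the `Ad(Q_W)`-invariant homogeneous cochains carry all of the cohomology of the complex of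
`C_W`-invariant ones. For the preimage of a finite parabolic subgroup of `W` this follows by
averaging over cosets of `C_W`. In general, the functions on `W` have a basis, in the sense of
infinite sums, indexed by `w ∈ W`: the indicators of the cosets `w P`, where `P` is generated by
the non-descents of `w`. Invariance under a simple reflection `s` means being supported on those `w`
without a descent at `s`. Invariant cochains thus correspond to supports in a lattice of subsets of
`W`, intersections and sums of supports are controlled by Mayer–Vietoris, and the induction over
sets `T` of simple reflections closes up: either `T` generates a finite subgroup, or every `w` has
a non-descent in `T`.

The group `C_W` is free abelian on the squares `e_x²`, one for each class of reflections: modulo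
these squares the generators `e_s` satisfy the Coxeter relations, and the degree homomorphisms
`Ad(Q_W) → ℤ` separate the squares. Adjoining one more square `t` to a subgroup `K` replaces the
`K`-invariant cochains by the kernel of `t - 1`, a surjective operator which is zero on cohomology,
so that the dimensions satisfy Pascal's rule.
-/

/-! ### Mayer–Vietoris induction in a distributive lattice -/

section LatticeInduction

variable {L I : Type*} [DistribLattice L] [BoundedOrder L]

theorem prop_inf_inf_sup_of_ssubset [DecidableEq I] {a : I → L} {P : L → Prop}
    (hsup : ∀ x y, P x → P y → P (x ⊓ y) → P (x ⊔ y)) {T : Finset I}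
    (hT : ∀ U ⊂ T, P (U.inf a)) (R : Finset I) (hR : R.Nonempty) :
    ∀ U : Finset I, U ∪ R ⊂ T → P (U.inf a ⊓ R.sup a) := by
  induction hR using Finset.Nonempty.cons_induction with
  | singleton r =>
    intro U hU
    simpa [Finset.union_comm, inf_comm, ← Finset.insert_eq] using hT _ hU
  | cons r R hr _ ih =>
    intro U hU
    rw [Finset.cons_eq_insert] at hU ⊢
    have hUR : U ∪ R ⊂ T :=
      (Finset.union_subset_union_right (Finset.subset_insert r R)).trans_ssubset hU
    have hrU : insert r U ⊂ T := by
      refine Finset.ssubset_of_subset_of_ssubset ?_ hU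
      grind
    have hmeet : (insert r U).inf a ⊓ (U.inf a ⊓ R.sup a) = (insert r U).inf a ⊓ R.sup a := by
      simp only [Finset.inf_insert, inf_assoc, inf_left_idem]
    have hjoin : U.inf a ⊓ (insert r R).sup a =
        (insert r U).inf a ⊔ (U.inf a ⊓ R.sup a) := by
      rw [Finset.inf_insert, Finset.sup_insert, inf_sup_left, inf_comm (a r)]
    rw [hjoin]
    refine hsup _ _ (hT _ hrU) (ih U hUR) ?_
    rw [hmeet]
    exact ih _ (by rwa [Finset.insert_union, ← Finset.union_insert])

theorem prop_inf_inf_sup_of_union_eq [DecidableEq I] {a : I → L} {P : L → Prop}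
    (hsup : ∀ x y, P x → P y → P (x ⊓ y) → P (x ⊔ y))
    (hinf : ∀ x y, P x → P y → P (x ⊔ y) → P (x ⊓ y)) {T : Finset I}
    (hT : ∀ U ⊂ T, P (U.inf a)) (htop : P (T.sup a)) (U : Finset I) :
    ∀ R : Finset I, R.Nonempty → Disjoint U R → U ∪ R = T → P (U.inf a ⊓ R.sup a) := by
  induction U using Finset.induction_on with
  | empty =>
    rintro R - - rfl
    simpa using htop
  | insert r U hr ih =>
    intro R hR hUR hunion
    have hmeet : (insert r U).inf a ⊓ R.sup a =
        (insert r U).inf a ⊓ (U.inf a ⊓ R.sup a) := by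
      simp only [Finset.inf_insert, inf_assoc, inf_left_idem]
    have hjoin : (insert r U).inf a ⊔ (U.inf a ⊓ R.sup a) =
        U.inf a ⊓ (insert r R).sup a := by
      rw [Finset.inf_insert, Finset.sup_insert, inf_sup_left, inf_comm (a r)]
    have hrR : r ∉ R := by grind [Finset.disjoint_left]
    obtain ⟨t, ht⟩ := hR
    have hins : insert r U ⊂ T := by
      rw [← hunion, Finset.ssubset_iff_of_subset Finset.subset_union_left]
      exact ⟨t, by simp [ht], Finset.disjoint_right.1 hUR ht⟩
    have hproper : U ∪ R ⊂ T := by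
      rw [← hunion, Finset.ssubset_iff_of_subset (by grind)]
      exact ⟨r, by simp, by simp [hr, hrR]⟩
    rw [hmeet]
    refine hinf _ _ (hT _ hins) (prop_inf_inf_sup_of_ssubset hsup hT R ⟨t, ht⟩ U hproper) ?_
    rw [hjoin]
    exact ih _ (Finset.insert_nonempty r R) (by grind [Finset.disjoint_left]) (by grind)

theorem prop_finset_inf {a : I → L} {P : L → Prop}
    (hsup : ∀ x y, P x → P y → P (x ⊓ y) → P (x ⊔ y))
    (hinf : ∀ x y, P x → P y → P (x ⊔ y) → P (x ⊓ y)) (htop : P ⊤)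
    (h : ∀ T : Finset I, P (T.inf a) ∨ T.sup a = ⊤) (T : Finset I) : P (T.inf a) := by
  classical
  induction T using Finset.strongInduction with
  | H T ih =>
    obtain hP | hT := h T
    · exact hP
    obtain rfl | ⟨s, hs⟩ := T.eq_empty_or_nonempty
    · simpa using htop
    · have := prop_inf_inf_sup_of_union_eq hsup hinf ih (hT ▸ htop) (T.erase s) {s} (by simp)
        (by simp) (by simpa [Finset.union_comm, ← Finset.insert_eq] using Finset.insert_erase hs)
      rwa [Finset.sup_singleton, inf_comm, ← Finset.inf_insert, Finset.insert_erase hs] at this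

end LatticeInduction

/-! ### Subcomplexes with acyclic quotient -/

section IsQuasiIsoIn

variable {R E : Type*} [Ring R] [AddCommGroup E] [Module R E]

/-- For a differential `d`, the subspace `P` of `E` is stable under `d` and carries all of the
cohomology of `E`: the quotient complex `E / P` is acyclic. -/
structure IsQuasiIsoIn (d : E →ₗ[R] E) (P F : Submodule R E) : Prop where
  map_mem : ∀ x ∈ P, d x ∈ P
  exists_sub_mem : ∀ x ∈ F, d x ∈ P → ∃ y ∈ F, x - d y ∈ P

variable {d : E →ₗ[R] E} {P Q F : Submodule R E}

theorem IsQuasiIsoIn.refl (hF : ∀ x ∈ F, d x ∈ F) : IsQuasiIsoIn d F F :=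
  ⟨hF, fun x hx _ => ⟨0, F.zero_mem, by simpa using hx⟩⟩

theorem IsQuasiIsoIn.inf (hd : ∀ x, d (d x) = 0) (hPF : P ≤ F) (hP : IsQuasiIsoIn d P F)
    (hQ : IsQuasiIsoIn d Q F) (hPQ : IsQuasiIsoIn d (P ⊔ Q) F) : IsQuasiIsoIn d (P ⊓ Q) F := by
  refine ⟨fun x hx => ⟨hP.map_mem x hx.1, hQ.map_mem x hx.2⟩, fun x hx hdx => ?_⟩
  obtain ⟨y, hyF, hy⟩ := hP.exists_sub_mem x hx hdx.1
  obtain ⟨z, hzF, hz⟩ := hQ.exists_sub_mem x hx hdx.2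
  have hyz : d (y - z) ∈ P ⊔ Q := by
    rw [show d (y - z) = -(x - d y) + (x - d z) by rw [map_sub]; abel]
    exact Submodule.add_mem_sup (P.neg_mem hy) hz
  obtain ⟨u, -, hu⟩ := hPQ.exists_sub_mem _ (F.sub_mem hyF hzF) hyz
  obtain ⟨p, hp, q, hq, hpq⟩ := Submodule.mem_sup.1 hu
  have hyp : y - p = z + q + d u := by
    rw [show y - p = (y - z - d u) - p + z + d u by abel, ← hpq]; abel
  refine ⟨y - p, F.sub_mem hyF (hPF hp), ?_, ?_⟩
  · rw [show x - d (y - p) = (x - d y) + d p by rw [map_sub]; abel]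
    exact P.add_mem hy (hP.map_mem p hp)
  · rw [show x - d (y - p) = (x - d z) - d q by rw [hyp, map_add, map_add, hd]; abel]
    exact Q.sub_mem hz (hQ.map_mem q hq)

theorem IsQuasiIsoIn.sup (hd : ∀ x, d (d x) = 0) (hPF : P ≤ F)
    (hP : IsQuasiIsoIn d P F) (hQ : IsQuasiIsoIn d Q F) (hPQ : IsQuasiIsoIn d (P ⊓ Q) F) :
    IsQuasiIsoIn d (P ⊔ Q) F := by
  have hmap : ∀ x ∈ P ⊔ Q, d x ∈ P ⊔ Q := by
    intro x hx
    obtain ⟨p, hp, q, hq, rfl⟩ := Submodule.mem_sup.1 hx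
    rw [map_add]
    exact Submodule.add_mem_sup (hP.map_mem p hp) (hQ.map_mem q hq)
  refine ⟨hmap, fun x hx hdx => ?_⟩
  obtain ⟨p, hp, q, hq, hpq⟩ := Submodule.mem_sup.1 hdx
  have hdp : d p = -d q := by
    rw [eq_neg_iff_add_eq_zero, ← map_add, hpq, hd]
  obtain ⟨u, huF, hu⟩ := hPQ.exists_sub_mem p (hPF hp)
    ⟨hP.map_mem p hp, hdp ▸ Q.neg_mem (hQ.map_mem q hq)⟩
  have hdu : d u ∈ P := by
    rw [show d u = p - (p - d u) by abel]
    exact P.sub_mem hp hu.1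
  obtain ⟨v, hvF, hv⟩ := hP.exists_sub_mem u huF hdu
  have hdxu : d (x - u) ∈ Q := by
    rw [show d (x - u) = (p - d u) + q by rw [map_sub, ← hpq]; abel]
    exact Q.add_mem hu.2 hq
  obtain ⟨y, hyF, hy⟩ := hQ.exists_sub_mem _ (F.sub_mem hx huF) hdxu
  refine ⟨v + y, F.add_mem hvF hyF, ?_⟩
  rw [show x - d (v + y) = (u - d v) + (x - u - d y) by rw [map_add]; abel]
  exact Submodule.add_mem_sup hv hy

theorem IsQuasiIsoIn.of_projection (A : E →ₗ[R] E) (hA : ∀ x, d (A x) = A (d x))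
    (hP : ∀ x ∈ P, d x ∈ P) (hmem : ∀ x ∈ F, A x ∈ P) (hid : ∀ x ∈ P, A x = x) (hPF : P ≤ F)
    (hhom : ∀ x ∈ F, d x = 0 → ∃ y ∈ F, A x - x = d y) : IsQuasiIsoIn d P F := by
  refine ⟨hP, fun x hx hdx => ?_⟩
  obtain ⟨y, hyF, hy⟩ := hhom (x - A x) (F.sub_mem hx (hPF (hmem x hx)))
    (by rw [map_sub, hA, hid _ hdx, sub_self])
  refine ⟨-y, F.neg_mem hyF, ?_⟩
  have : x - d (-y) = A x := by
    rw [map_neg, ← hy, map_sub, hid _ (hmem x hx)]; abel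
  exact this ▸ hmem x hx

end IsQuasiIsoIn

/-! ### Cochains on lists -/

section ListCochains

variable {k X Y : Type*} [CommRing k]

/-- The alternating sum `∑ᵢ (-1)ⁱ f (x₀, …, x̂ᵢ, …, xₙ)` of the values of a cochain `f` over the
faces of a list, as a linear functional of `f`. -/
def listBoundary : List X → (List X → k) →ₗ[k] k
  | [] => 0
  | x :: l => LinearMap.proj l - listBoundary l ∘ₗ LinearMap.funLeft k k (x :: ·)

/-- The differential of the homogeneous cochain complex on `X`. A cochain is a function of a
list, so all degrees are treated at once: lists of length `n` carry the cochains of degree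
`n - 1`. -/
def listD : (List X → k) →ₗ[k] List X → k := LinearMap.pi listBoundary

/-- The alternating sum `∑ᵢ (-1)ⁱ f (x₀, …, xᵢ, r xᵢ, …, r xₙ)`. -/
def listPrismAt (r : X → X) : List X → (List X → k) →ₗ[k] k
  | [] => 0
  | x :: l =>
    LinearMap.proj (x :: r x :: l.map r) - listPrismAt r l ∘ₗ LinearMap.funLeft k k (x :: ·)

/-- The prism operator: a homotopy between the identity and the pullback along `r`. -/
def listPrism (r : X → X) : (List X → k) →ₗ[k] List X → k := LinearMap.pi (listPrismAt r)

@[simp]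
theorem listD_nil (f : List X → k) : listD f [] = 0 := rfl

theorem listD_cons (f : List X → k) (x : X) (l : List X) :
    listD f (x :: l) = f l - listD (fun l' => f (x :: l')) l := rfl

@[simp]
theorem listPrism_nil (r : X → X) (f : List X → k) : listPrism r f [] = 0 := rfl

theorem listPrism_cons (r : X → X) (f : List X → k) (x : X) (l : List X) :
    listPrism r f (x :: l) =
      f (x :: r x :: l.map r) - listPrism r (fun l' => f (x :: l')) l := rfl

theorem listD_comp_cons (f : List X → k) (x : X) :
    (fun l => listD f (x :: l)) = f - listD (fun l => f (x :: l)) := rfl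

@[simp]
theorem listD_listD (f : List X → k) : listD (listD f) = 0 := by
  funext l
  induction l generalizing f with
  | nil => rfl
  | cons x l ih =>
    rw [listD_cons, listD_comp_cons, map_sub, Pi.sub_apply, ih]
    simp

/-- The pullback of cochains along a map. -/
def listPullback (r : X → Y) : (List Y → k) →ₗ[k] List X → k := LinearMap.funLeft k k (List.map r)

theorem listPullback_apply (r : X → Y) (f : List Y → k) (l : List X) :
    listPullback r f l = f (l.map r) := rfl

theorem listPullback_listPullback {Z : Type*} (r : X → Y) (s : Y → Z) (f : List Z → k) :
    listPullback r (listPullback s f) = listPullback (s ∘ r) f := by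
  funext l
  simp [listPullback_apply]

theorem listD_listPullback (r : X → Y) (f : List Y → k) :
    listD (listPullback r f) = listPullback r (listD f) := by
  funext l
  induction l generalizing f with
  | nil => rfl
  | cons x l ih =>
    rw [listD_cons, listPullback_apply, listPullback_apply, List.map_cons, listD_cons]
    exact congrArg _ (ih fun l' => f (r x :: l'))

theorem listPrism_listPullback {r s : X → X} (hrs : ∀ x, r (s x) = s (r x)) (f : List X → k) :
    listPrism r (listPullback s f) = listPullback s (listPrism r f) := by
  funext l
  induction l generalizing f with
  | nil => rfl
  | cons x l ih =>
    rw [listPrism_cons, listPullback_apply, listPullback_apply, List.map_cons (l := l),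
      listPrism_cons]
    refine congrArg₂ (· - ·) (by simp [hrs, Function.comp_def]) (ih fun l' => f (s x :: l'))

theorem listD_listPrism_add (r : X → X) (f : List X → k) :
    listD (listPrism r f) + listPrism r (listD f) = listPullback r f - f := by
  funext l
  induction l generalizing f with
  | nil => simp [listPullback_apply]
  | cons x l ih =>
    have hprism : (fun l' => listPrism r f (x :: l')) =
        listPullback r (fun l' => f (x :: r x :: l')) - listPrism r (fun l' => f (x :: l')) := rfl
    have ih := ih fun l' => f (x :: l')
    simp only [Pi.add_apply, Pi.sub_apply, listPullback_apply] at ih ⊢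
    rw [listD_cons, listPrism_cons, hprism, listD_comp_cons, map_sub, map_sub, Pi.sub_apply,
      Pi.sub_apply, listD_listPullback, listPullback_apply, listD_cons, listD_cons, List.map_cons]
    linear_combination ih

theorem listD_listPrism_of_closed (r : X → X) {f : List X → k} (hf : listD f = 0) :
    listD (listPrism r f) = listPullback r f - f := by
  simpa [hf] using listD_listPrism_add r f

theorem listD_apply_congr {f g : List X → k} {l : List X}
    (h : ∀ l' : List X, l'.length + 1 = l.length → f l' = g l') : listD f l = listD g l := by
  induction l generalizing f g with
  | nil => rfl
  | cons x l ih =>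
    rw [listD_cons, listD_cons, h l rfl, ih fun l' hl' => h (x :: l') (by simpa using hl')]

theorem listPrism_apply_congr {r : X → X} {f g : List X → k} {l : List X}
    (h : ∀ l' : List X, l'.length = l.length + 1 → f l' = g l') :
    listPrism r f l = listPrism r g l := by
  induction l generalizing f g with
  | nil => rfl
  | cons x l ih =>
    rw [listPrism_cons, listPrism_cons, h _ (by simp),
      ih fun l' hl' => h (x :: l') (by simpa using hl')]

/-- The restriction of a cochain to lists of length `n`, extended by zero. -/
def lengthTrunc (n : ℕ) : (List X → k) →ₗ[k] List X → k where
  toFun f l := if l.length = n then f l else 0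
  map_add' f g := by
    funext l
    by_cases hl : l.length = n <;> simp [hl]
  map_smul' c f := by
    funext l
    by_cases hl : l.length = n <;> simp [hl]

theorem lengthTrunc_apply (n : ℕ) (f : List X → k) (l : List X) :
    lengthTrunc n f l = if l.length = n then f l else 0 := rfl

theorem lengthTrunc_lengthTrunc (n : ℕ) (f : List X → k) :
    lengthTrunc n (lengthTrunc n f) = lengthTrunc n f := by
  funext l
  by_cases hl : l.length = n <;> simp [lengthTrunc_apply, hl]

theorem lengthTrunc_listPullback (n : ℕ) (r : X → Y) (f : List Y → k) :
    lengthTrunc n (listPullback r f) = listPullback r (lengthTrunc n f) := by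
  funext l
  simp [lengthTrunc_apply, listPullback_apply]

theorem listD_lengthTrunc (n : ℕ) (f : List X → k) :
    listD (lengthTrunc n f) = lengthTrunc (n + 1) (listD f) := by
  funext l
  by_cases hl : l.length = n + 1
  · rw [lengthTrunc_apply, if_pos hl]
    exact listD_apply_congr fun l' hl' => if_pos (by omega)
  · have hzero : listD (lengthTrunc n f) l = listD 0 l :=
      listD_apply_congr fun l' hl' => if_neg (by omega)
    rw [hzero, map_zero, Pi.zero_apply, lengthTrunc_apply, if_neg hl]

theorem listPrism_lengthTrunc (n : ℕ) (r : X → X) (f : List X → k) :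
    listPrism r (lengthTrunc (n + 1) f) = lengthTrunc n (listPrism r f) := by
  funext l
  by_cases hl : l.length = n
  · rw [lengthTrunc_apply, if_pos hl]
    exact listPrism_apply_congr fun l' hl' => if_pos (by omega)
  · have hzero : listPrism r (lengthTrunc (n + 1) f) l = listPrism r 0 l :=
      listPrism_apply_congr fun l' hl' => if_neg (by omega)
    rw [hzero, map_zero, Pi.zero_apply, lengthTrunc_apply, if_neg hl]

end ListCochains

/-! ### The exchange property and parabolic subgroups -/

section Exchange

variable {I W' : Type*} [Group W'] {N : CoxeterMatrix I} (cs : CoxeterSystem N W')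

open Classical in
/-- The action of a simple reflection `s` on `W × ℤ/2` which conjugates the first component and
flips the second one at `s` itself. These maps satisfy the Coxeter relations, and the resulting
action of `W` records the parity with which a reflection occurs in an inversion sequence. -/
noncomputable def inversionFlip (i : I) : Function.End (W' × ZMod 2) :=
  fun p => (cs.simple i * p.1 * cs.simple i, p.2 + if p.1 = cs.simple i then 1 else 0)

open Classical in
theorem prod_map_inversionFlip_reverse (ω : List I) (t : W') (ε : ZMod 2) :
    (ω.reverse.map (inversionFlip cs)).prod (t, ε) =
      ((cs.wordProd ω)⁻¹ * t * cs.wordProd ω, ε + (cs.leftInvSeq ω).count t) := by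
  induction ω generalizing t ε with
  | nil => exact Prod.ext (by simp [Function.End.one_def]) (by simp [Function.End.one_def])
  | cons i ω ih =>
    have hcount : (List.map (MulAut.conj (cs.simple i)) (cs.leftInvSeq ω)).count t =
        (cs.leftInvSeq ω).count (cs.simple i * t * cs.simple i) := by
      conv_lhs =>
        rw [show t = MulAut.conj (cs.simple i) (cs.simple i * t * cs.simple i) by simp [mul_assoc]]
      exact List.count_map_of_injective _ _ (MulAut.conj (cs.simple i)).injective _
    rw [List.reverse_cons, List.map_append, List.prod_append, List.map_singleton,
      List.prod_singleton]
    change (ω.reverse.map (inversionFlip cs)).prod (inversionFlip cs i (t, ε)) = _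
    rw [inversionFlip, ih, leftInvSeq, List.count_cons, hcount, wordProd_cons]
    refine Prod.ext (by simp [mul_assoc]) ?_
    simp only [beq_iff_eq, eq_comm (a := t)]
    push_cast
    ring

theorem exists_leftInvSeq_alternatingWord_eq_append (i j : I) :
    ∃ l, cs.leftInvSeq (alternatingWord j i (2 * N i j)) = l ++ l := by
  set c : ℕ → W' := fun n => cs.simple j * (cs.simple i * cs.simple j) ^ n with hc
  refine ⟨(List.range (N i j)).map c, ?_⟩
  have hperiod : c ∘ (N i j + ·) = c := by
    funext n
    simp [hc, pow_add]
  have hlis : cs.leftInvSeq (alternatingWord j i (2 * N i j)) =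
      (List.range (2 * N i j)).map c := by
    refine List.ext_getElem (by simp) fun n hn _ => ?_
    rw [cs.getElem_leftInvSeq_alternatingWord j i _ n (by simpa using hn),
      cs.prod_alternatingWord_eq_mul_pow]
    simp [hc, show (2 * n + 1) / 2 = n by omega]
  rw [hlis, two_mul, List.range_add, List.map_append, List.map_map, hperiod]

theorem inversionFlip_mul_pow (i j : I) (n : ℕ) :
    (inversionFlip cs i * inversionFlip cs j) ^ n =
      ((alternatingWord j i (2 * n)).reverse.map (inversionFlip cs)).prod := by
  induction n with
  | zero => rfl
  | succ n ih =>
    rw [pow_succ', ih, mul_add_one, alternatingWord, alternatingWord]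
    simp [mul_assoc]

theorem isLiftable_inversionFlip : N.IsLiftable (inversionFlip cs) := by
  classical
  intro i j
  obtain ⟨l, hl⟩ := exists_leftInvSeq_alternatingWord_eq_append cs i j
  have hprod : cs.wordProd (alternatingWord j i (2 * N i j)) = 1 := by
    rw [cs.prod_alternatingWord_eq_mul_pow]
    simp [N.symmetric i j]
  funext ⟨t, ε⟩
  rw [inversionFlip_mul_pow, prod_map_inversionFlip_reverse, hl, hprod, List.count_append]
  change _ = (t, ε)
  simp [CharTwo.add_self_eq_zero]

/-- The action of `W` on `W × ℤ/2` extending `inversionFlip`. -/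
noncomputable def inversionAction : W' →* Function.End (W' × ZMod 2) :=
  cs.lift ⟨inversionFlip cs, isLiftable_inversionFlip cs⟩

open Classical in
theorem inversionAction_wordProd (ω : List I) (t : W') (ε : ZMod 2) :
    inversionAction cs (cs.wordProd ω) (t, ε) =
      (cs.wordProd ω * t * (cs.wordProd ω)⁻¹, ε + (cs.rightInvSeq ω).count t) := by
  have hprod : inversionAction cs (cs.wordProd ω) =
      (ω.reverse.reverse.map (inversionFlip cs)).prod := by
    rw [List.reverse_reverse, wordProd, map_list_prod, List.map_map]
    congr 2
    funext i
    exact cs.lift_apply_simple _ i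
  rw [hprod, prod_map_inversionFlip_reverse, cs.leftInvSeq_reverse, List.count_reverse,
    cs.wordProd_reverse, inv_inv]

theorem simple_mem_rightInvSeq {ω : List I} {s : I}
    (h : cs.IsRightDescent (cs.wordProd ω) s) : cs.simple s ∈ cs.rightInvSeq ω := by
  classical
  set w := cs.wordProd ω with hw
  obtain ⟨ω', hω', hw'⟩ := cs.exists_isReduced (w * cs.simple s)
  have hnotMem : cs.simple s ∉ cs.rightInvSeq ω' := by
    intro hmem
    have hlt := (cs.isRightInversion_of_mem_rightInvSeq hω' hmem).2
    rw [← hw', mul_assoc, cs.simple_mul_simple_self, mul_one] at hlt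
    exact lt_asymm h hlt
  have hflip : (inversionAction cs w (cs.simple s, 0)).2 = 1 := by
    have hw_eq : w = cs.wordProd ω' * cs.wordProd [s] := by
      rw [← hw', cs.wordProd_singleton, mul_assoc, cs.simple_mul_simple_self, mul_one]
    rw [hw_eq, map_mul]
    change (inversionAction cs (cs.wordProd ω')
      (inversionAction cs (cs.wordProd [s]) (cs.simple s, 0))).2 = 1
    rw [inversionAction_wordProd, inversionAction_wordProd]
    simp [List.count_eq_zero_of_not_mem hnotMem]
  by_contra hcon
  rw [hw, inversionAction_wordProd, List.count_eq_zero_of_not_mem hcon] at hflip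
  simp at hflip

theorem exists_wordProd_eraseIdx_of_isRightDescent {ω : List I} {s : I}
    (h : cs.IsRightDescent (cs.wordProd ω) s) :
    ∃ j < ω.length, cs.wordProd ω * cs.simple s = cs.wordProd (ω.eraseIdx j) := by
  obtain ⟨j, hj, hjs⟩ := List.getElem_of_mem (simple_mem_rightInvSeq cs h)
  refine ⟨j, by simpa using hj, ?_⟩
  rw [← cs.wordProd_mul_getD_rightInvSeq, ← hjs, ← List.getD_eq_getElem _ 1 hj]

theorem exists_wordProd_eraseIdx_append {ω ω' : List I} {s : I} (hred : cs.IsReduced (ω' ++ [s]))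
    (h : cs.IsRightDescent (cs.wordProd (ω ++ ω')) s) :
    ∃ j < ω.length,
      cs.wordProd (ω ++ ω') * cs.simple s = cs.wordProd (ω.eraseIdx j ++ ω') := by
  obtain ⟨j, hj, he⟩ := exists_wordProd_eraseIdx_of_isRightDescent cs h
  by_cases hjω : j < ω.length
  · exact ⟨j, hjω, by rwa [List.eraseIdx_append_of_lt_length hjω] at he⟩
  exfalso
  rw [List.eraseIdx_append_of_length_le (by omega), cs.wordProd_append, cs.wordProd_append,
    mul_assoc] at he
  have hlength := cs.length_wordProd_le (ω'.eraseIdx (j - ω.length))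
  rw [← mul_left_cancel he, ← cs.wordProd_singleton, ← cs.wordProd_append, hred.eq,
    List.length_eraseIdx_of_lt (by simp at hj; omega)] at hlength
  simp at hlength
  omega

end Exchange

section Parabolic

variable {I W' : Type*} [Group W'] {N : CoxeterMatrix I} (cs : CoxeterSystem N W')

/-- The standard parabolic subgroup generated by the simple reflections in `T`. -/
def parabolic (T : Set I) : Subgroup W' := Subgroup.closure (cs.simple '' T)

variable {T : Set I}

theorem simple_mem_parabolic {s : I} (hs : s ∈ T) : cs.simple s ∈ parabolic cs T :=
  Subgroup.subset_closure ⟨s, hs, rfl⟩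

theorem wordProd_mem_parabolic {ω : List I} (h : ∀ i ∈ ω, i ∈ T) :
    cs.wordProd ω ∈ parabolic cs T := by
  refine (parabolic cs T).list_prod_mem ?_
  simpa using fun i hi => simple_mem_parabolic cs (h i hi)

theorem exists_isReduced_mul_simple {ω : List I} (hω : cs.IsReduced ω) (s : I) :
    ∃ ω', cs.IsReduced ω' ∧ (∀ i ∈ ω', i ∈ ω ∨ i = s) ∧
      cs.wordProd ω' = cs.wordProd ω * cs.simple s := by
  by_cases hd : cs.IsRightDescent (cs.wordProd ω) s
  · obtain ⟨j, hj, he⟩ := exists_wordProd_eraseIdx_of_isRightDescent cs hd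
    refine ⟨ω.eraseIdx j, ?_, fun i hi => .inl (List.mem_of_mem_eraseIdx hi), he.symm⟩
    rw [cs.isRightDescent_iff, he, hω.eq] at hd
    rw [CoxeterSystem.IsReduced, List.length_eraseIdx_of_lt hj]
    omega
  · refine ⟨ω ++ [s], ?_, by simp, by simp [cs.wordProd_append]⟩
    rw [cs.not_isRightDescent_iff, hω.eq] at hd
    simp [CoxeterSystem.IsReduced, cs.wordProd_append, hd]

theorem exists_isReduced_of_mem_parabolic {v : W'} (hv : v ∈ parabolic cs T) :
    ∃ ω, cs.IsReduced ω ∧ (∀ i ∈ ω, i ∈ T) ∧ cs.wordProd ω = v := by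
  have hmul : ∀ (x : W') (s : I), s ∈ T →
      (∃ ω, cs.IsReduced ω ∧ (∀ i ∈ ω, i ∈ T) ∧ cs.wordProd ω = x) →
      ∃ ω, cs.IsReduced ω ∧ (∀ i ∈ ω, i ∈ T) ∧ cs.wordProd ω = x * cs.simple s := by
    rintro x s hs ⟨ω, hω, hT, rfl⟩
    obtain ⟨ω', hω', hmem, he⟩ := exists_isReduced_mul_simple cs hω s
    refine ⟨ω', hω', fun i hi => ?_, he⟩
    obtain h | rfl := hmem i hi
    exacts [hT i h, hs]
  induction hv using Subgroup.closure_induction_right with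
  | one => exact ⟨[], by simp [CoxeterSystem.IsReduced], by simp, by simp⟩
  | mul_right x _ _ hy ih =>
    obtain ⟨s, hs, rfl⟩ := hy
    exact hmul x s hs ih
  | mul_inv_cancel x _ _ hy ih =>
    obtain ⟨s, hs, rfl⟩ := hy
    rw [cs.inv_simple]
    exact hmul x s hs ih

theorem isReduced_of_append {ω ω' : List I} (hω : cs.IsReduced (ω ++ ω')) : cs.IsReduced ω := by
  simpa using hω.take ω.length

theorem exists_append_of_forall_isRightDescent {w : W'} (hw : ∀ s ∈ T, cs.IsRightDescent w s)
    (ω : List I) (hω : cs.IsReduced ω) (hT : ∀ i ∈ ω, i ∈ T) :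
    ∃ ξ : List I, cs.wordProd (ξ ++ ω) = w ∧ (ξ ++ ω).length = cs.length w := by
  induction ω using List.reverseRecOn with
  | nil =>
    obtain ⟨ξ, hξ, rfl⟩ := cs.exists_isReduced w
    exact ⟨ξ, by simp, by simp [hξ.eq]⟩
  | append_singleton ω s ih =>
    obtain ⟨ξ, hξ, hlen⟩ := ih (isReduced_of_append cs hω) fun i hi => hT i (by simp [hi])
    obtain ⟨j, hj, he⟩ := exists_wordProd_eraseIdx_append cs hω (hξ ▸ hw s (hT s (by simp)))
    refine ⟨ξ.eraseIdx j, ?_, ?_⟩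
    · rw [← List.append_assoc, cs.wordProd_append, ← he, cs.wordProd_singleton, mul_assoc,
        cs.simple_mul_simple_self, mul_one, hξ]
    · simp only [List.length_append, List.length_eraseIdx_of_lt hj, List.length_singleton]
        at hlen ⊢
      omega

theorem finite_parabolic_of_forall_isRightDescent [Finite I] {w : W'}
    (hw : ∀ s ∈ T, cs.IsRightDescent w s) : Finite (parabolic cs T) := by
  have hfin : (cs.wordProd '' {ω : List I | ω.length ≤ cs.length w}).Finite :=
    (List.finite_length_le I _).image _
  refine Set.Finite.to_subtype (s := (parabolic cs T : Set W')) (hfin.subset ?_)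
  intro v hv
  obtain ⟨ω, hω, hT, rfl⟩ := exists_isReduced_of_mem_parabolic cs hv
  obtain ⟨ξ, -, hlen⟩ := exists_append_of_forall_isRightDescent cs hw ω hω hT
  exact ⟨ω, by simp only [List.length_append, Set.mem_ofPred_eq] at hlen ⊢; omega, rfl⟩

theorem length_mul_wordProd_of_isMinimal {u : W'}
    (hu : ∀ v ∈ parabolic cs T, cs.length u ≤ cs.length (u * v)) (ω : List I)
    (hω : cs.IsReduced ω) (hT : ∀ i ∈ ω, i ∈ T) :
    cs.length (u * cs.wordProd ω) = cs.length u + ω.length := by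
  induction ω using List.reverseRecOn with
  | nil => simp
  | append_singleton ω s ih =>
    have hTω : ∀ i ∈ ω, i ∈ T := fun i hi => hT i (by simp [hi])
    have hnot : ¬ cs.IsRightDescent (u * cs.wordProd ω) s := by
      intro hd
      obtain ⟨ξ, hξ, rfl⟩ := cs.exists_isReduced u
      rw [← cs.wordProd_append] at hd
      obtain ⟨j, hj, he⟩ := exists_wordProd_eraseIdx_append cs hω hd
      rw [cs.wordProd_append, cs.wordProd_append] at he
      have hω' := wordProd_mem_parabolic cs hTω
      have hle := hu (cs.wordProd ω * cs.simple s * (cs.wordProd ω)⁻¹)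
        (mul_mem (mul_mem hω' (simple_mem_parabolic cs (hT s (by simp)))) (inv_mem hω'))
      rw [← mul_assoc, ← mul_assoc, he, mul_inv_cancel_right, hξ.eq] at hle
      have hlt := cs.length_wordProd_le (ξ.eraseIdx j)
      rw [List.length_eraseIdx_of_lt hj] at hlt
      omega
    rw [cs.not_isRightDescent_iff, ih (isReduced_of_append cs hω) hTω] at hnot
    rw [cs.wordProd_append, cs.wordProd_singleton, ← mul_assoc, hnot, List.length_append,
      List.length_singleton, add_assoc]

theorem exists_isMinimal_mul_mem_parabolic (w : W') (T : Set I) :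
    ∃ u ∈ parabolic cs T, ∀ v ∈ parabolic cs T, cs.length (w * u) ≤ cs.length (w * u * v) := by
  have hne : (parabolic cs T : Set W').Nonempty := ⟨1, (parabolic cs T).one_mem⟩
  have hu := Function.argminOn_mem (fun u => cs.length (w * u)) _ hne
  refine ⟨_, hu, fun v hv => ?_⟩
  rw [mul_assoc]
  exact Function.argminOn_le (fun u => cs.length (w * u)) _ ((parabolic cs T).mul_mem hu hv)

theorem length_lt_length_mul_of_mem_parabolic {w v : W'}
    (hw : ∀ s ∈ T, ¬ cs.IsRightDescent w s) (hv : v ∈ parabolic cs T) (hv1 : v ≠ 1) :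
    cs.length w < cs.length (w * v) := by
  obtain ⟨u, hu, hmin⟩ := exists_isMinimal_mul_mem_parabolic cs w T
  have hadd := length_mul_wordProd_of_isMinimal cs hmin
  obtain ⟨ω, hω, hT, hωu⟩ := exists_isReduced_of_mem_parabolic cs (inv_mem hu)
  obtain rfl : u = 1 := by
    obtain rfl | ⟨ω', s, rfl⟩ := List.eq_nil_or_concat ω
    · simpa using hωu.symm
    exfalso
    rw [List.concat_eq_append] at hω hT hωu
    refine hw s (hT s (by simp)) ?_
    have hω' := hadd ω' (isReduced_of_append cs hω) fun i hi => hT i (by simp [hi])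
    have hws : w * u * cs.wordProd ω' = w * cs.simple s := by
      rw [cs.wordProd_append, cs.wordProd_singleton] at hωu
      rw [← mul_inv_cancel_right (cs.wordProd ω') (cs.simple s), hωu]
      simp [mul_assoc]
    have hw_eq := hadd _ hω hT
    rw [hωu, mul_inv_cancel_right, List.length_append, List.length_singleton] at hw_eq
    rw [IsRightDescent, ← hws, hω', hw_eq]
    omega
  obtain ⟨ω, hω, hT, rfl⟩ := exists_isReduced_of_mem_parabolic cs hv
  have hω_ne : ω ≠ [] := by rintro rfl; simp at hv1
  have := hadd ω hω hT
  rw [mul_one] at this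
  have := List.length_pos_iff.2 hω_ne
  omega

end Parabolic

/-! ### Right invariant functions on a Coxeter group -/

section Unitriangular

variable {ι k V : Type*} [CommRing k] [AddCommGroup V] [Module k V]

/-- The operator sending `a : ι → V` to the function `x ↦ ∑ w ∈ D x, a w`. -/
def sumOver (k V : Type*) [CommRing k] [AddCommGroup V] [Module k V] (D : ι → Finset ι) :
    (ι → V) →ₗ[k] ι → V :=
  LinearMap.pi fun x => ∑ w ∈ D x, LinearMap.proj w

theorem sumOver_apply (D : ι → Finset ι) (a : ι → V) (x : ι) :
    sumOver k V D a x = ∑ w ∈ D x, a w := by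
  simp [sumOver]

variable {D : ι → Finset ι} {ℓ : ι → ℕ}

theorem sumOver_apply_eq_self (hmem : ∀ x, x ∈ D x) (hlt : ∀ x, ∀ w ∈ D x, w = x ∨ ℓ w < ℓ x)
    {a : ι → V} {x : ι} (ha : ∀ w, ℓ w < ℓ x → a w = 0) : sumOver k V D a x = a x := by
  rw [sumOver_apply]
  exact Finset.sum_eq_single_of_mem x (hmem x) fun w hw hne => ha w ((hlt x w hw).resolve_left hne)

theorem sumOver_injective (hmem : ∀ x, x ∈ D x) (hlt : ∀ x, ∀ w ∈ D x, w = x ∨ ℓ w < ℓ x) :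
    Function.Injective (sumOver k V D) := by
  rw [← LinearMap.ker_eq_bot, LinearMap.ker_eq_bot']
  intro a ha
  funext x
  induction hn : ℓ x using Nat.strong_induction_on generalizing x with
  | _ n ih =>
    subst hn
    rw [← sumOver_apply_eq_self (k := k) hmem hlt fun w hw => ih _ hw w rfl, ha]

theorem sumOver_surjective (hmem : ∀ x, x ∈ D x) (hlt : ∀ x, ∀ w ∈ D x, w = x ∨ ℓ w < ℓ x) :
    Function.Surjective (sumOver k V D) := by
  classical
  intro f
  have hlt' : ∀ x, ∀ w ∈ (D x).erase x, ℓ w < ℓ x := fun x w hw =>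
    (hlt x w (Finset.mem_of_mem_erase hw)).resolve_left (Finset.ne_of_mem_erase hw)
  let a : ι → V := (measure ℓ).wf.fix fun x rec =>
    f x - ∑ w : (D x).erase x, rec w.1 (hlt' x w.1 w.2)
  have ha : ∀ x, a x = f x - ∑ w ∈ (D x).erase x, a w := fun x => by
    rw [← Finset.sum_coe_sort]
    exact WellFounded.fix_eq _ _ x
  refine ⟨a, funext fun x => ?_⟩
  rw [sumOver_apply, ← Finset.add_sum_erase _ _ (hmem x), ha x, sub_add_cancel]

end Unitriangular

section VanishingOff

variable (k V : Type*) {ι : Type*} [CommRing k] [AddCommGroup V] [Module k V]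

/-- The functions `ι → V` which vanish outside `S`. -/
def vanishingOff (S : Set ι) : Submodule k (ι → V) := Submodule.pi Sᶜ fun _ => ⊥

variable {k V}

theorem mem_vanishingOff {S : Set ι} {a : ι → V} :
    a ∈ vanishingOff k V S ↔ ∀ w ∉ S, a w = 0 := by
  simp [vanishingOff, Submodule.mem_pi]

theorem vanishingOff_univ : vanishingOff k V (Set.univ : Set ι) = ⊤ := by
  ext a
  simp [mem_vanishingOff]

theorem vanishingOff_inf (S T : Set ι) :
    vanishingOff k V (S ⊓ T) = vanishingOff k V S ⊓ vanishingOff k V T := by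
  ext a
  simp only [Submodule.mem_inf, mem_vanishingOff, Set.inf_eq_inter, Set.mem_inter_iff]
  grind

theorem vanishingOff_sup (S T : Set ι) :
    vanishingOff k V (S ⊔ T) = vanishingOff k V S ⊔ vanishingOff k V T := by
  classical
  refine le_antisymm (fun a ha => ?_) (sup_le ?_ ?_)
  · rw [mem_vanishingOff] at ha
    refine Submodule.mem_sup.2 ⟨S.indicator a, ?_, Sᶜ.indicator a, ?_,
      Set.indicator_self_add_compl S a⟩
    · exact mem_vanishingOff.2 fun w hw => Set.indicator_of_notMem hw a
    · refine mem_vanishingOff.2 fun w hw => ?_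
      by_cases hS : w ∈ S
      · exact Set.indicator_of_notMem (by simpa using hS) a
      · rw [Set.indicator_of_mem (by simpa using hS), ha w (by simp [hS, hw])]
  all_goals
    intro a ha
    rw [mem_vanishingOff] at ha ⊢
    exact fun w hw => ha w (by simp_all)

theorem mem_vanishingOff_finset_inf {I : Type*} {S : I → Set ι} {T : Finset I} {a : ι → V} :
    a ∈ vanishingOff k V (T.inf S) ↔ ∀ s ∈ T, a ∈ vanishingOff k V (S s) := by
  simp only [mem_vanishingOff, Finset.inf_set_eq_iInter, Set.mem_iInter, not_forall]
  grind

end VanishingOff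

section RightInvariant

variable {I W' k V : Type*} [Group W'] {N : CoxeterMatrix I} (cs : CoxeterSystem N W')
  [CommRing k] [AddCommGroup V] [Module k V]

/-- The elements without a right descent at `s`. -/
def nonDescents (s : I) : Set W' := {w | ¬ cs.IsRightDescent w s}

theorem eq_or_length_lt_of_inv_mul_mem {w x : W'}
    (h : w⁻¹ * x ∈ parabolic cs {s | w ∈ nonDescents cs s}) :
    w = x ∨ cs.length w < cs.length x := by
  by_cases hwx : w = x
  · exact .inl hwx
  · have hlt := length_lt_length_mul_of_mem_parabolic cs (fun s hs => hs) h
      (by rwa [Ne, inv_mul_eq_one])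
    exact .inr (by rwa [mul_inv_cancel_left] at hlt)

variable [Finite I]

theorem finite_setOf_length_le (n : ℕ) : {w : W' | cs.length w ≤ n}.Finite := by
  refine ((List.finite_length_le I n).image cs.wordProd).subset fun w hw => ?_
  obtain ⟨ω, hω, rfl⟩ := cs.exists_isReduced w
  exact ⟨ω, hω.eq.symm.trans_le hw, rfl⟩

theorem finite_setOf_inv_mul_mem (x : W') :
    {w : W' | w⁻¹ * x ∈ parabolic cs {s | w ∈ nonDescents cs s}}.Finite := by
  refine (finite_setOf_length_le cs (cs.length x)).subset fun w hw => ?_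
  rw [Set.mem_ofPred_eq] at hw ⊢
  obtain h | hlt := eq_or_length_lt_of_inv_mul_mem cs hw
  exacts [h ▸ le_rfl, hlt.le]

/-- The operator `(Φ a) x = ∑ a w`, summed over the `w` for which `x` lies in the coset `w P` of
the parabolic subgroup `P` generated by the non-descents of `w`. The indicator functions of these
cosets are a basis of the functions on `W` (in the sense of infinite sums) which is adapted to
right invariance under simple reflections. -/
noncomputable def cosetSum (k V : Type*) [CommRing k] [AddCommGroup V] [Module k V] :
    (W' → V) →ₗ[k] W' → V :=
  sumOver k V fun x => (finite_setOf_inv_mul_mem cs x).toFinset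

theorem cosetSum_apply_eq_self {a : W' → V} {x : W'}
    (ha : ∀ w, cs.length w < cs.length x → a w = 0) : cosetSum cs k V a x = a x :=
  sumOver_apply_eq_self (by simp [one_mem])
    (fun x w hw => eq_or_length_lt_of_inv_mul_mem cs (by simpa using hw)) ha

theorem cosetSum_injective : Function.Injective (cosetSum cs k V) :=
  sumOver_injective (ℓ := cs.length) (by simp [one_mem])
    fun x w hw => eq_or_length_lt_of_inv_mul_mem cs (by simpa using hw)

theorem cosetSum_surjective : Function.Surjective (cosetSum cs k V) :=
  sumOver_surjective (ℓ := cs.length) (by simp [one_mem])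
    fun x w hw => eq_or_length_lt_of_inv_mul_mem cs (by simpa using hw)

theorem cosetSum_mul_simple {s : I} {a : W' → V} (ha : a ∈ vanishingOff k V (nonDescents cs s))
    (x : W') : cosetSum cs k V a (x * cs.simple s) = cosetSum cs k V a x := by
  classical
  rw [mem_vanishingOff] at ha
  have hfilter : ∀ y, cosetSum cs k V a y =
      ∑ w ∈ (finite_setOf_inv_mul_mem cs y).toFinset with w ∈ nonDescents cs s, a w := by
    intro y
    rw [cosetSum, sumOver_apply]
    exact (Finset.sum_filter_of_ne fun w _ hw => by_contra fun hs => hw (ha w hs)).symm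
  rw [hfilter, hfilter]
  congr 1
  ext w
  simp only [Finset.mem_filter, Set.Finite.mem_toFinset, Set.mem_ofPred_eq, ← mul_assoc]
  exact and_congr_left fun hw => Subgroup.mul_mem_cancel_right _ (simple_mem_parabolic cs hw)

theorem eq_zero_of_cosetSum_mul_simple {s : I} {a : W' → V}
    (hinv : ∀ x, cosetSum cs k V a (x * cs.simple s) = cosetSum cs k V a x)
    (ha : ∀ w ∈ nonDescents cs s, a w = 0) : a = 0 := by
  funext x
  induction hn : cs.length x using Nat.strong_induction_on generalizing x with
  | _ n ih =>
    subst hn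
    by_cases hx : x ∈ nonDescents cs s
    · exact ha x hx
    · have hlt : cs.length (x * cs.simple s) < cs.length x := not_not.1 hx
      rw [← cosetSum_apply_eq_self (k := k) cs fun w hw => ih _ hw w rfl, ← hinv,
        cosetSum_apply_eq_self cs fun w hw => ih _ (hw.trans hlt) w rfl]
      exact ih _ hlt _ rfl

theorem cosetSum_mul_simple_iff (s : I) (a : W' → V) :
    (∀ x, cosetSum cs k V a (x * cs.simple s) = cosetSum cs k V a x) ↔
      a ∈ vanishingOff k V (nonDescents cs s) := by
  refine ⟨fun h => ?_, fun ha x => cosetSum_mul_simple cs ha x⟩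
  have hmem : (nonDescents cs s).indicator a ∈ vanishingOff k V (nonDescents cs s) :=
    mem_vanishingOff.2 fun w hw => Set.indicator_of_notMem hw a
  have hzero : a - (nonDescents cs s).indicator a = 0 := by
    refine eq_zero_of_cosetSum_mul_simple (k := k) cs (s := s) (fun x => ?_) fun w hw => ?_
    · rw [map_sub, Pi.sub_apply, Pi.sub_apply, h, cosetSum_mul_simple cs hmem]
    · rw [Pi.sub_apply, Set.indicator_of_mem hw, sub_self]
  rwa [← sub_eq_zero.1 hzero] at hmem

end RightInvariant

/-! ### Invariant cochains -/

section InvariantCochains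

variable {G Q k : Type*} [Group G] [Group Q] [CommRing k]

/-- Left translation of cochains on lists of group elements. -/
def listTranslate (g : G) : (List G → k) →ₗ[k] List G → k := listPullback (g * ·)

theorem listTranslate_apply (g : G) (f : List G → k) (l : List G) :
    listTranslate g f l = f (l.map (g * ·)) := rfl

theorem listTranslate_translate (g h : G) (f : List G → k) :
    listTranslate h (listTranslate g f) = listTranslate (g * h) f := by
  rw [listTranslate, listTranslate, listPullback_listPullback, listTranslate]
  exact congrArg (listPullback · f) (funext fun x => (mul_assoc g h x).symm)

theorem listTranslate_one (f : List G → k) : listTranslate 1 f = f := by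
  funext l
  simp [listTranslate_apply]

/-- The group of all `g` whose left translation fixes the cochain `f`. -/
def cochainStabilizer (f : List G → k) : Subgroup G where
  carrier := {g | listTranslate g f = f}
  mul_mem' {g h} hg hh := by
    rw [Set.mem_ofPred_eq] at hg hh ⊢
    rw [← listTranslate_translate, hg, hh]
  one_mem' := listTranslate_one f
  inv_mem' {g} hg := by
    rw [Set.mem_ofPred_eq] at hg ⊢
    conv_lhs => rw [← hg, listTranslate_translate, mul_inv_cancel, listTranslate_one]

theorem mem_cochainStabilizer {f : List G → k} {g : G} :
    g ∈ cochainStabilizer f ↔ listTranslate g f = f := Iff.rfl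

variable (k) in
/-- The `K`-invariant homogeneous cochains on `G`, in all degrees at once: a list of length `n + 1`
is an `n`-simplex, and the value on the empty list (the augmentation) is required to vanish. -/
def invCochains (K : Subgroup G) : Submodule k (List G → k) where
  carrier := {f | f [] = 0 ∧ K ≤ cochainStabilizer f}
  add_mem' {f f'} hf hf' := ⟨by simp [hf.1, hf'.1], fun g hg => by
    rw [mem_cochainStabilizer, map_add, hf.2 hg, hf'.2 hg]⟩
  zero_mem' := ⟨rfl, fun _ _ => map_zero _⟩
  smul_mem' c f hf := ⟨by simp [hf.1], fun g hg => by
    rw [mem_cochainStabilizer, map_smul, hf.2 hg]⟩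

variable {K L : Subgroup G} {f : List G → k}

theorem invCochains_anti (h : K ≤ L) : invCochains k L ≤ invCochains k K :=
  fun _ hf => ⟨hf.1, h.trans hf.2⟩

theorem listD_mem_invCochains (hf : f ∈ invCochains k K) : listD f ∈ invCochains k K := by
  refine ⟨listD_nil f, fun g hg => ?_⟩
  rw [mem_cochainStabilizer, listTranslate, ← listD_listPullback]
  exact congrArg listD (hf.2 hg)

theorem listPrism_mem_invCochains {r : G → G} (hr : ∀ g ∈ K, ∀ x, r (g * x) = g * r x)
    (hf : f ∈ invCochains k K) : listPrism r f ∈ invCochains k K := by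
  refine ⟨listPrism_nil r f, fun g hg => ?_⟩
  rw [mem_cochainStabilizer, listTranslate, ← listPrism_listPullback (hr g hg)]
  exact congrArg (listPrism r) (hf.2 hg)

theorem listTranslate_mem_invCochains {t : G} (ht : ∀ g ∈ K, t * g = g * t)
    (hf : f ∈ invCochains k K) : listTranslate t f ∈ invCochains k K := by
  refine ⟨hf.1, fun g hg => ?_⟩
  rw [mem_cochainStabilizer, listTranslate_translate, ht g hg, ← listTranslate_translate, hf.2 hg]

theorem lengthTrunc_mem_invCochains (n : ℕ) (hf : f ∈ invCochains k K) :
    lengthTrunc n f ∈ invCochains k K := by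
  refine ⟨by simp [lengthTrunc_apply, hf.1], fun g hg => ?_⟩
  rw [mem_cochainStabilizer, listTranslate, ← lengthTrunc_listPullback]
  exact congrArg (lengthTrunc n) (hf.2 hg)

variable {φ : G →* Q}

theorem listTranslate_eq_of_map_eq (hf : f ∈ invCochains k φ.ker) {g h : G} (hgh : φ g = φ h) :
    listTranslate g f = listTranslate h f := by
  have hmem : g * h⁻¹ ∈ φ.ker := by rw [MonoidHom.mem_ker, map_mul, hgh, ← map_mul]; simp
  rw [← inv_mul_cancel_right g h, ← listTranslate_translate, hf.2 hmem]

theorem mem_invCochains_comap_closure_iff (hφ : Function.Surjective φ)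
    (hf : f ∈ invCochains k φ.ker) (S : Set Q) :
    f ∈ invCochains k ((Subgroup.closure S).comap φ) ↔ ∀ g, φ g ∈ S → listTranslate g f = f := by
  refine ⟨fun h g hg => h.2 (Subgroup.subset_closure hg), fun h => ⟨hf.1, ?_⟩⟩
  have hS : Subgroup.closure S ≤ (cochainStabilizer f).map φ := by
    refine (Subgroup.closure_le _).2 fun s hs => ?_
    obtain ⟨g, rfl⟩ := hφ s
    exact ⟨g, h g hs, rfl⟩
  calc (Subgroup.closure S).comap φ ≤ ((cochainStabilizer f).map φ).comap φ :=
        Subgroup.comap_mono hS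
    _ = cochainStabilizer f := by rw [Subgroup.comap_map_eq, sup_eq_left.2 hf.2]

variable (k φ) in
/-- The cochain with coordinates `F`. A cochain on `G` invariant under `ker φ` is determined by its
values on the simplices `g, g t₁, …, g tₙ`, which depend only on `φ g` and `t`; using `(φ g)⁻¹` as
the coordinate turns left translation by `g` into right translation by `(φ g)⁻¹`. -/
def ofCosetFunction : (Q → List G → k) →ₗ[k] List G → k where
  toFun F
    | [] => 0
    | x :: t => F (φ x)⁻¹ (t.map (x⁻¹ * ·))
  map_add' F F' := by
    funext l
    cases l <;> simp
  map_smul' c F := by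
    funext l
    cases l <;> simp

theorem ofCosetFunction_cons (F : Q → List G → k) (x : G) (t : List G) :
    ofCosetFunction k φ F (x :: t) = F (φ x)⁻¹ (t.map (x⁻¹ * ·)) := rfl

theorem ofCosetFunction_injective (hφ : Function.Surjective φ) :
    Function.Injective (ofCosetFunction k φ) := by
  intro F F' h
  funext w t
  obtain ⟨x, hx⟩ := hφ w⁻¹
  simpa [ofCosetFunction_cons, hx] using congrFun h (x :: t.map (x * ·))

theorem listTranslate_ofCosetFunction (g : G) (F : Q → List G → k) :
    listTranslate g (ofCosetFunction k φ F) = ofCosetFunction k φ fun w => F (w * (φ g)⁻¹) := by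
  funext l
  cases l with
  | nil => rfl
  | cons x t => simp [listTranslate_apply, ofCosetFunction_cons, Function.comp_def, mul_assoc]

theorem listTranslate_ofCosetFunction_eq_self_iff (hφ : Function.Surjective φ) {g : G}
    {F : Q → List G → k} :
    listTranslate g (ofCosetFunction k φ F) = ofCosetFunction k φ F ↔
      ∀ w, F (w * (φ g)⁻¹) = F w := by
  rw [listTranslate_ofCosetFunction, (ofCosetFunction_injective hφ).eq_iff, funext_iff]

theorem range_ofCosetFunction (hφ : Function.Surjective φ) :
    LinearMap.range (ofCosetFunction k φ) = invCochains k φ.ker := by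
  refine le_antisymm ?_ fun f hf => ?_
  · rintro _ ⟨F, rfl⟩
    refine ⟨rfl, fun g hg => (listTranslate_ofCosetFunction_eq_self_iff hφ).2 fun w => ?_⟩
    rw [MonoidHom.mem_ker.1 hg, inv_one, mul_one]
  · choose σ hσ using hφ
    refine ⟨fun w t => f ((1 :: t).map (σ w⁻¹ * ·)), funext fun l => ?_⟩
    cases l with
    | nil => exact hf.1.symm
    | cons x t =>
      have hx := listTranslate_eq_of_map_eq hf (g := σ (φ x)⁻¹⁻¹) (h := x) (by simp [hσ])
      simpa [listTranslate_apply, ofCosetFunction_cons, Function.comp_def] using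
        congrFun hx (1 :: t.map (x⁻¹ * ·))

end InvariantCochains

section Averaging

variable {G Q k ι : Type*} [Group G] [Group Q] [Field k] [Fintype ι]

/-- The mean of the left translates of a cochain by the elements `σ i`. -/
noncomputable def averageTranslate (k : Type*) [Field k] (σ : ι → G) :
    (List G → k) →ₗ[k] List G → k :=
  (Fintype.card ι : k)⁻¹ • ∑ i, listTranslate (σ i)

theorem averageTranslate_apply (k : Type*) [Field k] (σ : ι → G) (f : List G → k) :
    averageTranslate k σ f = (Fintype.card ι : k)⁻¹ • ∑ i, listTranslate (σ i) f := by
  simp [averageTranslate]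

theorem listD_averageTranslate (σ : ι → G) (f : List G → k) :
    listD (averageTranslate k σ f) = averageTranslate k σ (listD f) := by
  simp only [averageTranslate_apply, map_smul, map_sum, listTranslate, listD_listPullback]

theorem averageTranslate_mem_invCochains {φ : G →* Q} {P : Subgroup Q} [Fintype P] {σ : P → G}
    (hσ : ∀ w, φ (σ w) = w) {f : List G → k} (hf : f ∈ invCochains k φ.ker) :
    averageTranslate k σ f ∈ invCochains k (P.comap φ) := by
  refine ⟨by simp [averageTranslate_apply, listTranslate_apply, hf.1], fun g hg => ?_⟩
  rw [mem_cochainStabilizer, averageTranslate_apply, map_smul, map_sum]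
  refine congrArg _ (Fintype.sum_equiv (Equiv.mulRight (⟨φ g, hg⟩ : P)) _ _ fun w => ?_)
  rw [listTranslate_translate]
  exact listTranslate_eq_of_map_eq hf (by simp [hσ])

variable [CharZero k]

theorem inv_card_smul_sum_const {V : Type*} [AddCommGroup V] [Module k V] [Nonempty ι] (f : V) :
    (Fintype.card ι : k)⁻¹ • ∑ _i : ι, f = f := by
  have hcard : (Fintype.card ι : k) ≠ 0 := Nat.cast_ne_zero.2 Fintype.card_ne_zero
  rw [Finset.sum_const, Finset.card_univ, ← Nat.cast_smul_eq_nsmul k, inv_smul_smul₀ hcard]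

theorem averageTranslate_eq_self [Nonempty ι] {σ : ι → G} {f : List G → k}
    (h : ∀ i, listTranslate (σ i) f = f) : averageTranslate k σ f = f := by
  rw [averageTranslate_apply, Finset.sum_congr rfl fun i _ => h i, inv_card_smul_sum_const]

theorem averageTranslate_sub_self_of_closed [Nonempty ι] (σ : ι → G) {f : List G → k}
    (hf : listD f = 0) :
    averageTranslate k σ f - f =
      listD ((Fintype.card ι : k)⁻¹ • ∑ i, listPrism (σ i * ·) f) := by
  simp only [map_smul, map_sum, listD_listPrism_of_closed _ hf, Finset.sum_sub_distrib, smul_sub,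
    inv_card_smul_sum_const]
  rw [averageTranslate_apply]
  rfl

theorem isQuasiIsoIn_invCochains_comap {φ : G →* Q} (hφ : Function.Surjective φ)
    (hc : φ.ker ≤ Subgroup.center G) (P : Subgroup Q) [Finite P] :
    IsQuasiIsoIn listD (invCochains k (P.comap φ)) (invCochains k φ.ker) := by
  have := Fintype.ofFinite P
  choose τ hτ using hφ
  let σ : P → G := fun w => τ w
  have hσ : ∀ w, φ (σ w) = w := fun w => hτ w
  refine .of_projection (averageTranslate k σ) (listD_averageTranslate σ)
    (fun f hf => listD_mem_invCochains hf) (fun f hf => averageTranslate_mem_invCochains hσ hf)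
    (fun f hf => averageTranslate_eq_self fun w => hf.2 (by simp [hσ]))
    (invCochains_anti (φ.ker_le_comap P)) fun f hf hdf =>
      ⟨_, ?_, averageTranslate_sub_self_of_closed σ hdf⟩
  refine Submodule.smul_mem _ _ (Submodule.sum_mem _ fun w _ => ?_)
  refine listPrism_mem_invCochains (fun g hg x => ?_) hf
  rw [← mul_assoc, ← mul_assoc, Subgroup.mem_center_iff.1 (hc hg)]

end Averaging

/-! ### Central extensions of Coxeter groups -/

section CoxeterExtension

variable {I W' G k : Type*} [Group W'] [Group G] {N : CoxeterMatrix I} (cs : CoxeterSystem N W')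

theorem finite_parabolic_or_sup_nonDescents_eq_top [Finite I] (T : Finset I) :
    Finite (parabolic cs (T : Set I)) ∨ T.sup (nonDescents cs) = ⊤ := by
  refine or_iff_not_imp_right.2 fun hT => ?_
  obtain ⟨w, hw⟩ := (Set.ne_univ_iff_exists_notMem _).1 hT
  simp only [Finset.sup_set_eq_biUnion, Set.mem_iUnion, not_exists] at hw
  exact finite_parabolic_of_forall_isRightDescent cs fun s hs => not_not.1 (hw s hs)

variable [Finite I] {φ : G →* W'}

/-- The cochains which, in terms of the basis of coset indicators, are supported on `S`. -/
noncomputable def cosetCochains (k : Type*) [CommRing k] (φ : G →* W') (S : Set W') :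
    Submodule k (List G → k) :=
  (vanishingOff k (List G → k) S).map (ofCosetFunction k φ ∘ₗ cosetSum cs k (List G → k))

section CommRing

variable [CommRing k]

theorem ofCosetFunction_comp_cosetSum_injective (hφ : Function.Surjective φ) :
    Function.Injective (ofCosetFunction k φ ∘ₗ cosetSum cs k (List G → k)) := by
  rw [LinearMap.coe_comp]
  exact (ofCosetFunction_injective hφ).comp (cosetSum_injective cs)

theorem cosetCochains_univ (hφ : Function.Surjective φ) :
    cosetCochains cs k φ Set.univ = invCochains k φ.ker := by
  rw [cosetCochains, vanishingOff_univ, Submodule.map_top, LinearMap.range_comp_of_range_eq_top,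
    range_ofCosetFunction hφ]
  exact LinearMap.range_eq_top.2 (cosetSum_surjective cs)

theorem cosetCochains_le (hφ : Function.Surjective φ) (S : Set W') :
    cosetCochains cs k φ S ≤ invCochains k φ.ker := by
  rw [← cosetCochains_univ cs hφ, cosetCochains, cosetCochains, vanishingOff_univ]
  exact Submodule.map_mono le_top

theorem cosetCochains_inf (hφ : Function.Surjective φ) (S T : Set W') :
    cosetCochains cs k φ (S ⊓ T) = cosetCochains cs k φ S ⊓ cosetCochains cs k φ T := by
  rw [cosetCochains, vanishingOff_inf,
    Submodule.map_inf _ (ofCosetFunction_comp_cosetSum_injective cs hφ)]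
  rfl

theorem cosetCochains_sup (S T : Set W') :
    cosetCochains cs k φ (S ⊔ T) = cosetCochains cs k φ S ⊔ cosetCochains cs k φ T := by
  rw [cosetCochains, vanishingOff_sup, Submodule.map_sup]
  rfl

theorem cosetCochains_inf_nonDescents (hφ : Function.Surjective φ) (T : Finset I) :
    cosetCochains cs k φ (T.inf (nonDescents cs)) =
      invCochains k ((parabolic cs (T : Set I)).comap φ) := by
  ext f
  wlog hf : f ∈ invCochains k φ.ker
  · exact iff_of_false (fun h => hf (cosetCochains_le cs hφ _ h))
      fun h => hf (invCochains_anti (φ.ker_le_comap _) h)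
  obtain ⟨a, -, rfl⟩ := (cosetCochains_univ cs hφ).ge hf
  rw [cosetCochains, ← SetLike.mem_coe, Submodule.map_coe,
    (ofCosetFunction_comp_cosetSum_injective cs hφ).mem_set_image, SetLike.mem_coe,
    mem_vanishingOff_finset_inf, parabolic, mem_invCochains_comap_closure_iff hφ hf]
  refine ⟨?_, fun h s hs => ?_⟩
  · rintro h g ⟨s, hs, hg⟩
    rw [LinearMap.comp_apply, listTranslate_ofCosetFunction_eq_self_iff hφ, ← hg, cs.inv_simple]
    exact (cosetSum_mul_simple_iff cs s a).2 (h s hs)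
  · obtain ⟨g, hg⟩ := hφ (cs.simple s)
    have := (listTranslate_ofCosetFunction_eq_self_iff hφ).1 (h g ⟨s, hs, hg.symm⟩)
    rw [hg, cs.inv_simple] at this
    exact (cosetSum_mul_simple_iff cs s a).1 this

end CommRing

theorem isQuasiIsoIn_invCochains_top [Field k] [CharZero k] (cs : CoxeterSystem N W')
    (hφ : Function.Surjective φ) (hc : φ.ker ≤ Subgroup.center G) :
    IsQuasiIsoIn listD (invCochains k (⊤ : Subgroup G)) (invCochains k φ.ker) := by
  have := Fintype.ofFinite I
  let P (S : Set W') : Prop := IsQuasiIsoIn listD (cosetCochains cs k φ S) (invCochains k φ.ker)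
  have hsup : ∀ S T, P S → P T → P (S ⊓ T) → P (S ⊔ T) := by
    intro S T hS hT hST
    dsimp only [P] at hST ⊢
    rw [cosetCochains_inf cs hφ] at hST
    rw [cosetCochains_sup]
    exact .sup listD_listD (cosetCochains_le cs hφ S) hS hT hST
  have hinf : ∀ S T, P S → P T → P (S ⊔ T) → P (S ⊓ T) := by
    intro S T hS hT hST
    dsimp only [P] at hST ⊢
    rw [cosetCochains_sup] at hST
    rw [cosetCochains_inf cs hφ]
    exact .inf listD_listD (cosetCochains_le cs hφ S) hS hT hST
  have htop : P ⊤ := by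
    dsimp only [P]
    rw [Set.top_eq_univ, cosetCochains_univ cs hφ]
    exact .refl fun f hf => listD_mem_invCochains hf
  have hfinite : ∀ T : Finset I, P (T.inf (nonDescents cs)) ∨ T.sup (nonDescents cs) = ⊤ := by
    refine fun T => (finite_parabolic_or_sup_nonDescents_eq_top cs T).imp_left fun hT => ?_
    dsimp only [P]
    rw [cosetCochains_inf_nonDescents cs hφ]
    have : Finite (parabolic cs (T : Set I)) := hT
    exact isQuasiIsoIn_invCochains_comap hφ hc _
  have huniv : P (Finset.univ.inf (nonDescents cs)) := prop_finset_inf hsup hinf htop hfinite _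
  dsimp only [P] at huniv
  rwa [cosetCochains_inf_nonDescents cs hφ, parabolic, Finset.coe_univ, Set.image_univ,
    cs.subgroup_closure_range_simple, Subgroup.comap_top] at huniv

end CoxeterExtension

section Restriction

variable {G Q k : Type*} [Group G] [Group Q] [CommRing k]

/-- A retraction of `G` onto the subgroup `K` which is equivariant under left translation by `K`. -/
structure IsLeftRetraction (K : Subgroup G) (r : G → K) : Prop where
  map_mul : ∀ (x : K) (y : G), r (x * y) = x * r y
  apply_coe : ∀ x : K, r x = x

theorem exists_isLeftRetraction (K : Subgroup G) : ∃ r : G → K, IsLeftRetraction K r := by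
  obtain ⟨T, hT, hone⟩ := K.exists_isComplement_right 1
  exact ⟨fun x => (hT.equiv x).1, fun x y => by rw [hT.equiv_mul_left],
    fun x => hT.equiv_fst_eq_self_of_mem_of_one_mem hone x.2⟩

variable {K : Subgroup G} {r : G → K}

theorem listPullback_coe_mem {f : List G → k} (hf : f ∈ invCochains k K) :
    listPullback ((↑) : K → G) f ∈ invCochains k (⊤ : Subgroup K) := by
  refine ⟨hf.1, fun x _ => ?_⟩
  rw [mem_cochainStabilizer, listTranslate, listPullback_listPullback]
  conv_rhs => rw [← hf.2 x.2, listTranslate, listPullback_listPullback]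
  rfl

theorem IsLeftRetraction.listPullback_mem (hr : IsLeftRetraction K r) {f : List K → k}
    (hf : f ∈ invCochains k (⊤ : Subgroup K)) : listPullback r f ∈ invCochains k K := by
  refine ⟨hf.1, fun x hx => ?_⟩
  rw [mem_cochainStabilizer, listTranslate, listPullback_listPullback]
  conv_rhs => rw [← hf.2 (Subgroup.mem_top ⟨x, hx⟩), listTranslate, listPullback_listPullback]
  exact congrArg (listPullback · f) (funext fun y => hr.map_mul ⟨x, hx⟩ y)

theorem IsLeftRetraction.listPullback_coe_listPullback (hr : IsLeftRetraction K r)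
    (f : List K → k) : listPullback ((↑) : K → G) (listPullback r f) = f := by
  rw [listPullback_listPullback, show r ∘ (↑) = id from funext hr.apply_coe]
  funext l
  simp [listPullback_apply]

theorem listPullback_listPullback_coe_sub_self {f : List G → k} (hf : listD f = 0) :
    listPullback r (listPullback ((↑) : K → G) f) - f = listD (listPrism (fun x => ↑(r x)) f) := by
  rw [listPullback_listPullback, listD_listPrism_of_closed _ hf]
  rfl

theorem IsLeftRetraction.listPrism_mem (hr : IsLeftRetraction K r) {f : List G → k}
    (hf : f ∈ invCochains k K) : listPrism (fun x => ↑(r x)) f ∈ invCochains k K :=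
  listPrism_mem_invCochains (fun g hg x => congrArg Subtype.val (hr.map_mul ⟨g, hg⟩ x)) hf

theorem exists_eq_listD_of_listPullback_coe
    (h : IsQuasiIsoIn listD (invCochains k (⊤ : Subgroup G)) (invCochains k K)) {z : List G → k}
    (hz : z ∈ invCochains k (⊤ : Subgroup G)) (hdz : listD z = 0) {u : List K → k}
    (hu : u ∈ invCochains k (⊤ : Subgroup K)) (hzu : listPullback ((↑) : K → G) z = listD u) :
    ∃ y ∈ invCochains k (⊤ : Subgroup G), z = listD y := by
  obtain ⟨r, hr⟩ := exists_isLeftRetraction K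
  let v := listPullback r u - listPrism (fun x => ↑(r x)) z
  have hv : v ∈ invCochains k K :=
    Submodule.sub_mem _ (hr.listPullback_mem hu) (hr.listPrism_mem (invCochains_anti le_top hz))
  have hdv : listD v = z := by
    rw [map_sub, listD_listPullback, ← hzu, ← listPullback_listPullback_coe_sub_self hdz,
      sub_sub_cancel]
  obtain ⟨y, -, hy⟩ := h.exists_sub_mem v hv (hdv ▸ hz)
  exact ⟨v - listD y, hy, by rw [map_sub, listD_listD, sub_zero, hdv]⟩

theorem exists_listPullback_coe_sub_eq_listD
    (h : IsQuasiIsoIn listD (invCochains k (⊤ : Subgroup G)) (invCochains k K)) {z : List K → k}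
    (hz : z ∈ invCochains k (⊤ : Subgroup K)) (hdz : listD z = 0) :
    ∃ x ∈ invCochains k (⊤ : Subgroup G), listD x = 0 ∧ ∃ u ∈ invCochains k (⊤ : Subgroup K),
      listPullback ((↑) : K → G) x - z = listD u := by
  obtain ⟨r, hr⟩ := exists_isLeftRetraction K
  have hd : listD (listPullback r z) = 0 := by rw [listD_listPullback, hdz, map_zero]
  obtain ⟨y, hy, hy'⟩ := h.exists_sub_mem _ (hr.listPullback_mem hz) (hd ▸ zero_mem _)
  refine ⟨_, hy', by rw [map_sub, listD_listD, hd, sub_zero], _,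
    Submodule.neg_mem _ (listPullback_coe_mem hy), ?_⟩
  rw [map_sub, hr.listPullback_coe_listPullback, map_neg, listD_listPullback, sub_sub_cancel_left]

end Restriction

/-! ### Homology of complexes of modules -/

section ModuleHomology

open CategoryTheory

universe u v

variable {R : Type u} [Ring R]

theorem moduleCatLeftHomologyData_π_eq_iff {S : ShortComplex (ModuleCat.{v} R)}
    (z w : LinearMap.ker S.g.hom) :
    S.moduleCatLeftHomologyData.π.hom z = S.moduleCatLeftHomologyData.π.hom w ↔
      z.1 - w.1 ∈ LinearMap.range S.f.hom :=
  (Submodule.Quotient.eq (LinearMap.range S.moduleCatToCycles)).trans <|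
    iff_of_eq congr(z - w ∈ $(LinearMap.range_codRestrict _ S.f.hom _))

theorem isIso_homologyMap_of_forall {S T : ShortComplex (ModuleCat.{v} R)} (f : S ⟶ T)
    (hinj : ∀ x : S.X₂, S.g.hom x = 0 → f.τ₂.hom x ∈ LinearMap.range T.f.hom →
      x ∈ LinearMap.range S.f.hom)
    (hsurj : ∀ y : T.X₂, T.g.hom y = 0 →
      ∃ x : S.X₂, S.g.hom x = 0 ∧ f.τ₂.hom x - y ∈ LinearMap.range T.f.hom) :
    IsIso (ShortComplex.homologyMap f) := by
  let γ : ShortComplex.LeftHomologyMapData f S.moduleCatLeftHomologyData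
    T.moduleCatLeftHomologyData := default
  let fK : LinearMap.ker S.g.hom →ₗ[R] LinearMap.ker T.g.hom := γ.φK.hom
  have hK (z : LinearMap.ker S.g.hom) : (fK z).1 = f.τ₂.hom z.1 :=
    congr($(γ.commi).hom z)
  have hH (z : LinearMap.ker S.g.hom) : γ.φH.hom (S.moduleCatLeftHomologyData.π.hom z) =
      T.moduleCatLeftHomologyData.π.hom (fK z) :=
    congr($(γ.commπ).hom z)
  rw [← ShortComplex.quasiIso_iff, γ.quasiIso_iff, ConcreteCategory.isIso_iff_bijective]
  refine ⟨(injective_iff_map_eq_zero γ.φH.hom).2 fun c hc => ?_, fun c => ?_⟩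
  · obtain ⟨z, rfl⟩ := (LinearMap.range S.moduleCatToCycles).mkQ_surjective c
    have hz := (moduleCatLeftHomologyData_π_eq_iff (fK z) 0).1 ((hH z).symm.trans hc)
    rw [hK, ZeroMemClass.coe_zero, sub_zero] at hz
    exact (moduleCatLeftHomologyData_π_eq_iff z 0).2 (by simpa using hinj z.1 z.2 hz)
  · obtain ⟨y, rfl⟩ := (LinearMap.range T.moduleCatToCycles).mkQ_surjective c
    obtain ⟨x, hx, hxy⟩ := hsurj y.1 y.2
    let z : LinearMap.ker S.g.hom := ⟨x, hx⟩
    refine ⟨S.moduleCatLeftHomologyData.π.hom z, (hH z).trans ?_⟩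
    rw [← hK z] at hxy
    exact (moduleCatLeftHomologyData_π_eq_iff (fK z) y).2 hxy

variable (C : CochainComplex (ModuleCat.{v} R) ℕ)

theorem mem_ker_sc_g_iff (n : ℕ) (x : C.X n) :
    x ∈ LinearMap.ker (C.sc n).g.hom ↔ (C.d n (n + 1)).hom x = 0 := by
  have hnext : ∀ j, j = n + 1 → ((C.d n j).hom x = 0 ↔ (C.d n (n + 1)).hom x = 0) := by
    rintro _ rfl
    rfl
  exact hnext _ (CochainComplex.next ℕ n)

theorem mem_range_sc_succ_f_iff (n : ℕ) (x : C.X (n + 1)) :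
    x ∈ LinearMap.range (C.sc (n + 1)).f.hom ↔ ∃ y : C.X n, (C.d n (n + 1)).hom y = x := by
  have hprev : ∀ j, j = n →
      (x ∈ LinearMap.range (C.d j (n + 1)).hom ↔ ∃ y : C.X n, (C.d n (n + 1)).hom y = x) := by
    rintro _ rfl
    rfl
  exact hprev _ (CochainComplex.prev_nat_succ n)

theorem mem_range_sc_zero_f_iff (x : C.X 0) :
    x ∈ LinearMap.range (C.sc 0).f.hom ↔ x = 0 := by
  have hprev : ∀ j, j = 0 → (x ∈ LinearMap.range (C.d j 0).hom ↔ x = 0) := by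
    rintro _ rfl
    simp [eq_comm]
  exact hprev _ CochainComplex.prev_nat_zero

end ModuleHomology

/-! ### Comparison with inhomogeneous cochains -/

section Inhomogeneous

universe u

variable {k G H : Type u} [CommRing k] [Group G] [Group H]

/-- The inhomogeneous cochain `(g₁, …, gₙ) ↦ F (1, g₁, g₁g₂, …, g₁⋯gₙ)`. -/
def toInhomogeneous (n : ℕ) : (List G → k) →ₗ[k] (Fin n → G) → k :=
  LinearMap.funLeft k k fun g => List.ofFn (Fin.partialProd g)

theorem toInhomogeneous_apply (n : ℕ) (F : List G → k) (g : Fin n → G) :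
    toInhomogeneous n F g = F (List.ofFn (Fin.partialProd g)) := rfl

/-- The homogeneous cochain `(x₀, …, xₙ) ↦ f (x₀⁻¹x₁, …, xₙ₋₁⁻¹xₙ)`, which is inverse to
`toInhomogeneous n` on the `G`-invariant cochains supported on lists of length `n + 1`. -/
def ofInhomogeneous (n : ℕ) : ((Fin n → G) → k) →ₗ[k] List G → k where
  toFun f l :=
    if h : l.length = n + 1 then f fun i => (l[i.1]'(by omega))⁻¹ * l[i.1 + 1]'(by omega) else 0
  map_add' f f' := by
    funext l
    by_cases h : l.length = n + 1 <;> simp [h]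
  map_smul' c f := by
    funext l
    by_cases h : l.length = n + 1 <;> simp [h]

theorem ofInhomogeneous_apply (n : ℕ) (f : (Fin n → G) → k) {l : List G}
    (h : l.length = n + 1) : ofInhomogeneous n f l =
      f fun i => (l[i.1]'(by omega))⁻¹ * l[i.1 + 1]'(by omega) := dif_pos h

theorem ofInhomogeneous_apply_of_length_ne (n : ℕ) (f : (Fin n → G) → k) {l : List G}
    (h : l.length ≠ n + 1) : ofInhomogeneous n f l = 0 := dif_neg h

theorem ofInhomogeneous_mem_invCochains (n : ℕ) (f : (Fin n → G) → k) :
    ofInhomogeneous n f ∈ invCochains k (⊤ : Subgroup G) := by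
  refine ⟨ofInhomogeneous_apply_of_length_ne n f (by simp), fun g _ => funext fun l => ?_⟩
  rw [listTranslate_apply]
  by_cases h : l.length = n + 1
  · rw [ofInhomogeneous_apply n f h, ofInhomogeneous_apply n f (by simpa using h)]
    simp [mul_assoc]
  · rw [ofInhomogeneous_apply_of_length_ne n f h,
      ofInhomogeneous_apply_of_length_ne n f (by simpa using h)]

theorem toInhomogeneous_ofInhomogeneous (n : ℕ) (f : (Fin n → G) → k) :
    toInhomogeneous n (ofInhomogeneous n f) = f := by
  funext g
  rw [toInhomogeneous_apply, ofInhomogeneous_apply n f (by simp)]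
  refine congrArg f (funext fun i => ?_)
  rw [List.getElem_ofFn, List.getElem_ofFn]
  exact Fin.partialProd_right_inv g i

theorem ofInhomogeneous_toInhomogeneous (n : ℕ) {F : List G → k}
    (hF : F ∈ invCochains k (⊤ : Subgroup G)) :
    ofInhomogeneous n (toInhomogeneous n F) = lengthTrunc (n + 1) F := by
  funext l
  by_cases hl : l.length = n + 1
  · obtain ⟨x, rfl⟩ : ∃ x : Fin (n + 1) → G, l = List.ofFn x :=
      ⟨fun i => l[i.1], List.ext_getElem (by simpa using hl) (by simp [-List.ofFn_succ])⟩
    have hx : List.ofFn x =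
        (List.ofFn (Fin.partialProd fun i : Fin n => (x i.castSucc)⁻¹ * x i.succ)).map
          (x 0 * ·) := by
      rw [List.map_ofFn]
      exact congrArg List.ofFn (Fin.partialProd_left_inv x).symm
    rw [lengthTrunc_apply, if_pos hl, ofInhomogeneous_apply n _ hl, toInhomogeneous_apply]
    conv_rhs => rw [hx, ← listTranslate_apply (f := F), hF.2 (Subgroup.mem_top _)]
    simp only [List.getElem_ofFn]
    rfl
  · rw [lengthTrunc_apply, if_neg hl, ofInhomogeneous_apply_of_length_ne n _ hl]

theorem lengthTrunc_ofInhomogeneous (n : ℕ) (f : (Fin n → G) → k) :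
    lengthTrunc (n + 1) (ofInhomogeneous n f) = ofInhomogeneous n f := by
  rw [← ofInhomogeneous_toInhomogeneous n (ofInhomogeneous_mem_invCochains n f),
    toInhomogeneous_ofInhomogeneous]

theorem listD_ofFn {X : Type*} (n : ℕ) (x : Fin (n + 1) → X) (F : List X → k) :
    listD F (List.ofFn x) =
      ∑ i : Fin (n + 1), (-1) ^ (i : ℕ) * F (List.ofFn fun j => x (i.succAbove j)) := by
  induction n generalizing F with
  | zero => simp [listD_cons]
  | succ n ih =>
    rw [Fin.sum_univ_succ, List.ofFn_succ, listD_cons, ih fun i => x i.succ, sub_eq_add_neg,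
      ← Finset.sum_neg_distrib]
    refine congrArg₂ (· + ·) (by simp) (Finset.sum_congr rfl fun i _ => ?_)
    rw [List.ofFn_succ (f := fun j : Fin (n + 1) => x (i.succ.succAbove j))]
    simp [Fin.succ_succAbove_succ, pow_succ]

theorem toInhomogeneous_listD (n : ℕ) {F : List G → k}
    (hF : F ∈ invCochains k (⊤ : Subgroup G)) :
    toInhomogeneous (n + 1) (listD F) =
      (inhomogeneousCochains.d (Rep.trivial k G k) n).hom (toInhomogeneous n F) := by
  funext g
  have hface : (List.ofFn fun j => Fin.partialProd g ((0 : Fin (n + 2)).succAbove j)) =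
      (List.ofFn (Fin.partialProd fun i : Fin n => g i.succ)).map (g 0 * ·) := by
    rw [List.map_ofFn]
    refine congrArg List.ofFn (funext fun j => ?_)
    rw [Fin.succAbove_zero, Fin.partialProd_succ']
    rfl
  rw [inhomogeneousCochains.d_hom_apply, toInhomogeneous_apply, listD_ofFn, Fin.sum_univ_succ,
    hface, ← listTranslate_apply (f := F), hF.2 (Subgroup.mem_top _)]
  refine congrArg₂ (· + ·) (by simp [toInhomogeneous_apply]) (Finset.sum_congr rfl fun i _ => ?_)
  rw [toInhomogeneous_apply, Fin.partialProd_contractNth]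
  rfl

theorem toInhomogeneous_zero_listD {F : List G → k} (hF : F [] = 0) :
    toInhomogeneous 0 (listD F) = 0 := by
  funext g
  simp [toInhomogeneous_apply, listD_cons, hF]

theorem listD_ofInhomogeneous (n : ℕ) (f : (Fin n → G) → k) :
    listD (ofInhomogeneous n f) =
      ofInhomogeneous (n + 1) ((inhomogeneousCochains.d (Rep.trivial k G k) n).hom f) := by
  have hf := ofInhomogeneous_mem_invCochains n f
  conv_rhs => rw [← toInhomogeneous_ofInhomogeneous n f]
  rw [← toInhomogeneous_listD n hf, ofInhomogeneous_toInhomogeneous _ (listD_mem_invCochains hf),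
    ← listD_lengthTrunc, ← ofInhomogeneous_toInhomogeneous n hf, toInhomogeneous_ofInhomogeneous]

theorem mem_ker_sc_g_inhomogeneousCochains_iff (n : ℕ) (f : (Fin n → G) → k) :
    f ∈ LinearMap.ker ((inhomogeneousCochains (Rep.trivial k G k)).sc n).g.hom ↔
      listD (ofInhomogeneous n f) = 0 := by
  refine (mem_ker_sc_g_iff (inhomogeneousCochains (Rep.trivial k G k)) n f).trans ?_
  rw [inhomogeneousCochains.d_def, listD_ofInhomogeneous]
  exact ((Function.LeftInverse.injective
    (toInhomogeneous_ofInhomogeneous (n + 1))).eq_iff' (map_zero _)).symm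

theorem mem_range_sc_f_inhomogeneousCochains_iff (n : ℕ) (f : (Fin n → G) → k) :
    f ∈ LinearMap.range ((inhomogeneousCochains (Rep.trivial k G k)).sc n).f.hom ↔
      ∃ F ∈ invCochains k (⊤ : Subgroup G), toInhomogeneous n (listD F) = f := by
  cases n with
  | zero =>
    refine (mem_range_sc_zero_f_iff (inhomogeneousCochains (Rep.trivial k G k)) f).trans ?_
    refine ⟨fun h => ⟨0, zero_mem _, by simpa using h.symm⟩, ?_⟩
    rintro ⟨F, hF, rfl⟩
    exact toInhomogeneous_zero_listD hF.1
  | succ n =>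
    refine (mem_range_sc_succ_f_iff (inhomogeneousCochains (Rep.trivial k G k)) n f).trans ?_
    rw [inhomogeneousCochains.d_def]
    constructor
    · rintro ⟨y, rfl⟩
      have hy := ofInhomogeneous_mem_invCochains n y
      exact ⟨_, hy, by rw [toInhomogeneous_listD n hy, toInhomogeneous_ofInhomogeneous]⟩
    · rintro ⟨F, hF, rfl⟩
      exact ⟨toInhomogeneous n F, (toInhomogeneous_listD n hF).symm⟩

theorem listPullback_ofInhomogeneous (φ : H →* G) (n : ℕ) (f : (Fin n → G) → k) :
    listPullback φ (ofInhomogeneous n f) = ofInhomogeneous n fun h => f (φ ∘ h) := by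
  funext l
  rw [listPullback_apply]
  by_cases hl : l.length = n + 1
  · rw [ofInhomogeneous_apply n _ hl, ofInhomogeneous_apply n f (by simpa using hl)]
    simp [Function.comp_def]
  · rw [ofInhomogeneous_apply_of_length_ne n _ hl,
      ofInhomogeneous_apply_of_length_ne n f (by simpa using hl)]

theorem toInhomogeneous_listPullback (φ : H →* G) (n : ℕ) (F : List G → k) (h : Fin n → H) :
    toInhomogeneous n (listPullback φ F) h = toInhomogeneous n F (φ ∘ h) := by
  rw [toInhomogeneous_apply, toInhomogeneous_apply, listPullback_apply, List.map_ofFn]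
  refine congrArg (fun p => F (List.ofFn p)) (funext fun i => ?_)
  induction i using Fin.induction with
  | zero => simp
  | succ i ih => simpa [Fin.partialProd_succ] using ih

variable {K : Subgroup G}

theorem exists_toInhomogeneous_listD_eq_of_restrict
    (hK : IsQuasiIsoIn listD (invCochains k (⊤ : Subgroup G)) (invCochains k K)) {n : ℕ}
    {f : (Fin n → G) → k} (hf : listD (ofInhomogeneous n f) = 0) {u : List K → k}
    (hu : u ∈ invCochains k (⊤ : Subgroup K))
    (hfu : toInhomogeneous n (listD u) = fun h => f (K.subtype ∘ h)) :
    ∃ y ∈ invCochains k (⊤ : Subgroup G), toInhomogeneous n (listD y) = f := by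
  have hpull : listPullback K.subtype (ofInhomogeneous n f) = listD (lengthTrunc n u) := by
    rw [listPullback_ofInhomogeneous, listD_lengthTrunc,
      ← ofInhomogeneous_toInhomogeneous n (listD_mem_invCochains hu), hfu]
  obtain ⟨y, hy, hfy⟩ := exists_eq_listD_of_listPullback_coe hK
    (ofInhomogeneous_mem_invCochains n f) hf (lengthTrunc_mem_invCochains n hu) hpull
  exact ⟨y, hy, by rw [← hfy, toInhomogeneous_ofInhomogeneous]⟩

theorem exists_restrict_sub_eq_toInhomogeneous_listD
    (hK : IsQuasiIsoIn listD (invCochains k (⊤ : Subgroup G)) (invCochains k K)) {n : ℕ}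
    {f : (Fin n → K) → k} (hf : listD (ofInhomogeneous n f) = 0) :
    ∃ x : (Fin n → G) → k, listD (ofInhomogeneous n x) = 0 ∧
      ∃ u ∈ invCochains k (⊤ : Subgroup K),
        toInhomogeneous n (listD u) = (fun h => x (K.subtype ∘ h)) - f := by
  obtain ⟨x, hx, hdx, u, hu, hxu⟩ := exists_listPullback_coe_sub_eq_listD hK
    (ofInhomogeneous_mem_invCochains n f) hf
  refine ⟨toInhomogeneous n x, ?_, u, hu, ?_⟩
  · rw [ofInhomogeneous_toInhomogeneous n hx, listD_lengthTrunc, hdx, map_zero]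
  · rw [← hxu, map_sub, toInhomogeneous_ofInhomogeneous]
    exact congrArg (· - f) (funext fun g => toInhomogeneous_listPullback K.subtype n x g)

end Inhomogeneous

theorem isIso_homologyMap_cochainsRes {G : Type} [Group G] {K : Subgroup G}
    (hK : IsQuasiIsoIn listD (invCochains ℚ (⊤ : Subgroup G)) (invCochains ℚ K)) (n : ℕ) :
    CategoryTheory.IsIso (HomologicalComplex.homologyMap (cochainsRes K.subtype) n) := by
  refine isIso_homologyMap_of_forall
    ((HomologicalComplex.shortComplexFunctor _ _ n).map (cochainsRes K.subtype))
    (fun f hf hres => ?_) fun f hf => ?_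
  · obtain ⟨u, hu, hfu⟩ := (mem_range_sc_f_inhomogeneousCochains_iff n _).1 hres
    exact (mem_range_sc_f_inhomogeneousCochains_iff n f).2 <|
      exists_toInhomogeneous_listD_eq_of_restrict hK
        ((mem_ker_sc_g_inhomogeneousCochains_iff n f).1 hf) hu hfu
  · obtain ⟨x, hx, hxf⟩ := exists_restrict_sub_eq_toInhomogeneous_listD hK
      ((mem_ker_sc_g_inhomogeneousCochains_iff n f).1 hf)
    exact ⟨x, (mem_ker_sc_g_inhomogeneousCochains_iff n x).2 hx,
      (mem_range_sc_f_inhomogeneousCochains_iff n _).2 hxf⟩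

/-! ### Ranks of subquotients -/

section SubquotRank

universe v

variable {k : Type*} {E E' : Type v} [Ring k] [AddCommGroup E] [Module k E] [AddCommGroup E']
  [Module k E']

/-- The dimension of the subquotient `Z / (B ∩ Z)` of a module. -/
noncomputable def subquotRank (Z B : Submodule k E) : Cardinal :=
  Module.rank k (Z ⧸ B.submoduleOf Z)

theorem subquotRank_inf_right (Z B : Submodule k E) : subquotRank Z (Z ⊓ B) = subquotRank Z B := by
  rw [subquotRank, Submodule.submoduleOf, Submodule.comap_inf, Submodule.comap_subtype_self,
    top_inf_eq, subquotRank, Submodule.submoduleOf]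

theorem rank_map_eq_subquotRank_ker (D : Submodule k E) (f : E →ₗ[k] E') :
    Module.rank k (D.map f) = subquotRank D (LinearMap.ker f) := by
  rw [← LinearMap.range_domRestrict]
  exact (f.domRestrict D).quotKerEquivRange.rank_eq.symm

theorem subquotRank_eq_rank_map_mkQ (Z B : Submodule k E) :
    subquotRank Z B = Module.rank k (Z.map B.mkQ) := by
  rw [rank_map_eq_subquotRank_ker, Submodule.ker_mkQ]

theorem subquotRank_map (f : E →ₗ[k] E') (D B : Submodule k E) :
    subquotRank (D.map f) (B.map f) = subquotRank D (B ⊔ LinearMap.ker f) := by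
  rw [subquotRank_eq_rank_map_mkQ, ← Submodule.map_comp, rank_map_eq_subquotRank_ker,
    LinearMap.ker_comp, Submodule.ker_mkQ, Submodule.comap_map_eq]

theorem subquotRank_sup_left (Z B : Submodule k E) : subquotRank (Z ⊔ B) B = subquotRank Z B := by
  rw [subquotRank_eq_rank_map_mkQ, subquotRank_eq_rank_map_mkQ, Submodule.map_sup,
    Submodule.mkQ_map_self, sup_bot_eq]

theorem subquotRank_eq_zero [Nontrivial k] {Z B : Submodule k E} (h : Z ≤ B) :
    subquotRank Z B = 0 := by
  rw [← subquotRank_sup_left, sup_eq_right.2 h, subquotRank_eq_rank_map_mkQ,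
    Submodule.mkQ_map_self, rank_bot]

theorem subquotRank_map_of_disjoint (f : E →ₗ[k] E') {D B : Submodule k E} (hB : B ≤ D)
    (hf : Disjoint D (LinearMap.ker f)) : subquotRank (D.map f) (B.map f) = subquotRank D B := by
  rw [subquotRank_map, ← subquotRank_inf_right, inf_comm, sup_inf_assoc_of_le _ hB, inf_comm _ D,
    hf.eq_bot, sup_bot_eq]

theorem rank_homology_eq_subquotRank (S : CategoryTheory.ShortComplex (ModuleCat.{v} k)) :
    Module.rank k S.homology = subquotRank (LinearMap.ker S.g.hom) (LinearMap.range S.f.hom) := by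
  have hrange : LinearMap.range S.moduleCatToCycles =
      (LinearMap.range S.f.hom).submoduleOf (LinearMap.ker S.g.hom) :=
    LinearMap.range_codRestrict _ _ _
  rw [S.moduleCatHomologyIso.toLinearEquiv.rank_eq, subquotRank, ← hrange]
  rfl

variable [HasRankNullity.{v} k]

theorem rank_map_add_rank_inf_ker (D : Submodule k E) (f : E →ₗ[k] E') :
    Module.rank k (D.map f) + Module.rank k ↥(D ⊓ LinearMap.ker f) = Module.rank k D := by
  rw [rank_map_eq_subquotRank_ker, ← subquotRank_inf_right, subquotRank,
    ← (Submodule.submoduleOfEquivOfLe inf_le_left).rank_eq, Submodule.rank_quotient_add_rank]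

theorem subquotRank_eq_add (Z : Submodule k E) {B C : Submodule k E} (h : B ≤ C) :
    subquotRank Z B = subquotRank Z C + subquotRank (Z ⊓ C) B := by
  have hmap : (Z.map B.mkQ).map (Submodule.factor h) = Z.map C.mkQ := by
    rw [← Submodule.map_comp]
    rfl
  have hker : Z.map B.mkQ ⊓ LinearMap.ker (Submodule.factor h) = (Z ⊓ C).map B.mkQ := by
    rw [Submodule.map_inf_eq_map_inf_comap, ← LinearMap.ker_comp]
    exact congrArg (fun C => (Z ⊓ C).map B.mkQ) C.ker_mkQ
  rw [subquotRank_eq_rank_map_mkQ, ← rank_map_add_rank_inf_ker _ (Submodule.factor h), hmap, hker,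
    subquotRank_eq_rank_map_mkQ, subquotRank_eq_rank_map_mkQ]

end SubquotRank

section CohomologyRank

universe v

variable {k : Type*} {E : Type v} [Ring k] [AddCommGroup E] [Module k E]

/-- The dimension of the `m`-th cohomology of the complex `F 0 → F 1 → F 2 → ⋯` with differential
`d`, where `F 1` sits in degree `0` and `F 0` is the augmentation. -/
noncomputable def cohomologyRank (d : E →ₗ[k] E) (F : ℕ → Submodule k E) (m : ℕ) : Cardinal :=
  subquotRank (F (m + 1) ⊓ LinearMap.ker d) ((F m).map d)

/-- The operator `N` acts on the complex `(F, d)` as a surjective endomorphism inducing zero on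
cohomology. The long exact sequence of `0 → ker N → F → F → 0` then splits into short ones. -/
structure IsNullSurjection (d N : E →ₗ[k] E) (F : ℕ → Submodule k E) : Prop where
  d_d : ∀ x, d (d x) = 0
  d_comm : ∀ x, d (N x) = N (d x)
  map_d_le : ∀ m, (F m).map d ≤ F (m + 1)
  map_eq : ∀ m, (F m).map N = F m
  exists_eq_d : ∀ m, ∀ x ∈ F (m + 1), d x = 0 → ∃ y ∈ F m, N x = d y

namespace IsNullSurjection

variable {d N : E →ₗ[k] E} {F : ℕ → Submodule k E} (h : IsNullSurjection d N F)
include h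

theorem map_d_le_inf_ker (m : ℕ) : (F m).map d ≤ F (m + 1) ⊓ LinearMap.ker d :=
  le_inf (h.map_d_le m) (Submodule.map_le_iff_le_comap.2 fun x _ => h.d_d x)

theorem inf_ker_inf_ker_sup_map (m : ℕ) :
    F (m + 1) ⊓ LinearMap.ker N ⊓ LinearMap.ker d ⊔ (F m).map d = F (m + 1) ⊓ LinearMap.ker d := by
  refine le_antisymm (sup_le (inf_le_inf_right _ inf_le_left) (h.map_d_le_inf_ker m)) ?_
  rintro z ⟨hz, hdz⟩
  obtain ⟨y, hy, hNz⟩ := h.exists_eq_d m z hz hdz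
  obtain ⟨w, hw, rfl⟩ := (h.map_eq m).ge hy
  have hdw := h.map_d_le_inf_ker m ⟨w, hw, rfl⟩
  refine Submodule.mem_sup.2
    ⟨z - d w, ⟨⟨sub_mem hz hdw.1, LinearMap.mem_ker.2 ?_⟩, sub_mem hdz hdw.2⟩,
      d w, ⟨w, hw, rfl⟩, sub_add_cancel _ _⟩
  rw [map_sub, hNz, h.d_comm, sub_self]

theorem map_d_inf_ker_comp (m : ℕ) :
    (F m ⊓ LinearMap.ker (N ∘ₗ d)).map d =
      F (m + 1) ⊓ LinearMap.ker N ⊓ LinearMap.ker d ⊓ (F m).map d := by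
  refine le_antisymm ?_ ?_
  · rintro _ ⟨x, ⟨hx, hNdx⟩, rfl⟩
    exact ⟨⟨⟨h.map_d_le m ⟨x, hx, rfl⟩, hNdx⟩, h.d_d x⟩, x, hx, rfl⟩
  · rintro _ ⟨⟨⟨-, hNdx⟩, -⟩, x, hx, rfl⟩
    exact ⟨x, ⟨hx, hNdx⟩, rfl⟩

theorem map_inf_ker_comp (m : ℕ) :
    (F m ⊓ LinearMap.ker (N ∘ₗ d)).map N = F m ⊓ LinearMap.ker d := by
  refine le_antisymm ?_ ?_
  · rintro _ ⟨x, ⟨hx, hNdx⟩, rfl⟩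
    exact ⟨(h.map_eq m).le ⟨x, hx, rfl⟩, (h.d_comm x).trans hNdx⟩
  · rintro z ⟨hz, hdz⟩
    obtain ⟨x, hx, rfl⟩ := (h.map_eq m).ge hz
    exact ⟨x, ⟨hx, (h.d_comm x).symm.trans hdz⟩, rfl⟩

theorem map_map_d (m : ℕ) : ((F m).map d).map N = (F m).map d := by
  have hcomm : N ∘ₗ d = d ∘ₗ N := LinearMap.ext fun x => (h.d_comm x).symm
  rw [← Submodule.map_comp, hcomm, Submodule.map_comp, h.map_eq]

theorem inf_ker_comp_inf_sup_ker (m : ℕ) :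
    F (m + 1) ⊓ LinearMap.ker (N ∘ₗ d) ⊓ (F (m + 1) ⊓ LinearMap.ker N ⊔ LinearMap.ker d) =
      F (m + 1) ⊓ LinearMap.ker (N ∘ₗ d) ⊓ ((F m).map d ⊔ LinearMap.ker N) := by
  have hcomm : N ∘ₗ d = d ∘ₗ N := LinearMap.ext fun x => (h.d_comm x).symm
  have hkerd : LinearMap.ker d ≤ LinearMap.ker (N ∘ₗ d) := LinearMap.ker_le_ker_comp d N
  have hkerN : LinearMap.ker N ≤ LinearMap.ker (N ∘ₗ d) := hcomm ▸ LinearMap.ker_le_ker_comp N d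
  have hd := h.map_d_le_inf_ker m
  calc _ = F (m + 1) ⊓ LinearMap.ker N ⊔ F (m + 1) ⊓ LinearMap.ker d := by
        rw [inf_comm, sup_inf_assoc_of_le _ (inf_le_inf_left _ hkerN), inf_left_comm,
          inf_eq_left.2 hkerd]
    _ = F (m + 1) ⊓ LinearMap.ker N ⊔ (F m).map d := by
        rw [← h.inf_ker_inf_ker_sup_map m, ← sup_assoc, sup_inf_self]
    _ = _ := by
        rw [inf_comm _ ((F m).map d ⊔ LinearMap.ker N),
          sup_inf_assoc_of_le _ (hd.trans (inf_le_inf_left _ hkerd)), inf_left_comm,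
          inf_eq_left.2 hkerN, sup_comm]

theorem cohomologyRank_inf_ker_succ [HasRankNullity.{v} k] (m : ℕ) :
    cohomologyRank d (fun m => F m ⊓ LinearMap.ker N) (m + 1) =
      cohomologyRank d F (m + 1) + cohomologyRank d F m := by
  let D := F (m + 1) ⊓ LinearMap.ker (N ∘ₗ d)
  have hfirst : subquotRank (F (m + 2) ⊓ LinearMap.ker N ⊓ LinearMap.ker d) ((F (m + 1)).map d) =
      cohomologyRank d F (m + 1) := by
    rw [← subquotRank_sup_left, h.inf_ker_inf_ker_sup_map, cohomologyRank]
  have hsecond : subquotRank (D.map d) ((F (m + 1) ⊓ LinearMap.ker N).map d) =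
      cohomologyRank d F m :=
    calc _ = subquotRank D (F (m + 1) ⊓ LinearMap.ker N ⊔ LinearMap.ker d) := subquotRank_map _ _ _
      _ = subquotRank D ((F m).map d ⊔ LinearMap.ker N) := by
          rw [← subquotRank_inf_right, h.inf_ker_comp_inf_sup_ker, subquotRank_inf_right]
      _ = subquotRank (D.map N) (((F m).map d).map N) := (subquotRank_map _ _ _).symm
      _ = cohomologyRank d F m := by rw [h.map_inf_ker_comp, h.map_map_d, cohomologyRank]
  rw [cohomologyRank, subquotRank_eq_add _ (Submodule.map_mono (f := d) inf_le_left), hfirst,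
    ← h.map_d_inf_ker_comp, hsecond]

end IsNullSurjection

end CohomologyRank

/-! ### The rank of the cohomology of invariant cochains -/

section GradedInvCochains

universe v

variable {k G : Type v} [Field k] [Group G]

variable (k) in
/-- The `K`-invariant cochains on `G` supported on lists of length `m`, that is, of degree
`m - 1`. -/
def gradedInvCochains (K : Subgroup G) (m : ℕ) : Submodule k (List G → k) :=
  invCochains k K ⊓ LinearMap.eqLocus (lengthTrunc m) LinearMap.id

variable {K : Subgroup G} {m : ℕ} {f : List G → k}

theorem mem_gradedInvCochains_iff :
    f ∈ gradedInvCochains k K m ↔ f ∈ invCochains k K ∧ lengthTrunc m f = f := Iff.rfl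

theorem lengthTrunc_mem_gradedInvCochains (hf : f ∈ invCochains k K) (m : ℕ) :
    lengthTrunc m f ∈ gradedInvCochains k K m :=
  ⟨lengthTrunc_mem_invCochains m hf, lengthTrunc_lengthTrunc m f⟩

theorem apply_eq_zero_of_mem_gradedInvCochains (hf : f ∈ gradedInvCochains k K m) {l : List G}
    (hl : l.length ≠ m) : f l = 0 := by
  rw [← (mem_gradedInvCochains_iff.1 hf).2, lengthTrunc_apply, if_neg hl]

theorem gradedInvCochains_zero (K : Subgroup G) : gradedInvCochains k K 0 = ⊥ := by
  refine (Submodule.eq_bot_iff _).2 fun f hf => funext fun l => ?_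
  cases l with
  | nil => exact hf.1.1
  | cons x l => exact apply_eq_zero_of_mem_gradedInvCochains hf (by simp)

theorem listD_mem_gradedInvCochains (hf : f ∈ gradedInvCochains k K m) :
    listD f ∈ gradedInvCochains k K (m + 1) := by
  refine mem_gradedInvCochains_iff.2 ⟨listD_mem_invCochains hf.1, ?_⟩
  rw [← listD_lengthTrunc, (mem_gradedInvCochains_iff.1 hf).2]

theorem gradedInvCochains_one_inf_ker (K : Subgroup G) :
    gradedInvCochains k K 1 ⊓ LinearMap.ker listD = k ∙ lengthTrunc (X := G) (k := k) 1 1 := by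
  refine le_antisymm ?_ ((Submodule.span_singleton_le_iff_mem _ _).2
    (Submodule.mem_inf.2 ⟨⟨⟨rfl, fun g _ => ?_⟩, ?_⟩, ?_⟩))
  · rintro f ⟨hf, hdf⟩
    refine Submodule.mem_span_singleton.2 ⟨f [1], funext fun l => ?_⟩
    match l with
    | [] => simp [lengthTrunc_apply, hf.1.1]
    | [x] =>
      have hd : f [x] - f [1] = 0 := by simpa [listD_cons] using congrFun hdf [1, x]
      simp [lengthTrunc_apply, sub_eq_zero.1 hd]
    | x :: y :: l =>
      simp [lengthTrunc_apply, apply_eq_zero_of_mem_gradedInvCochains hf]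
  · rw [mem_cochainStabilizer, listTranslate, ← lengthTrunc_listPullback]
    rfl
  · exact lengthTrunc_lengthTrunc 1 1
  · rw [LinearMap.mem_ker, listD_lengthTrunc]
    funext l
    match l with
    | [] => simp [lengthTrunc_apply]
    | [x] => simp [lengthTrunc_apply]
    | [x, y] => simp [lengthTrunc_apply, listD_cons]
    | x :: y :: z :: l => simp [lengthTrunc_apply]

theorem cohomologyRank_gradedInvCochains_zero (K : Subgroup G) :
    cohomologyRank listD (gradedInvCochains k K) 0 = 1 := by
  rw [cohomologyRank, gradedInvCochains_zero, Submodule.map_bot, zero_add,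
    gradedInvCochains_one_inf_ker, ← LinearMap.ker_id, ← rank_map_eq_subquotRank_ker,
    Submodule.map_id, rank_submodule_eq_one_iff]
  refine ⟨_, Submodule.mem_span_singleton_self _, fun h => ?_, le_rfl⟩
  simpa [lengthTrunc_apply] using congrFun h [1]

theorem cohomologyRank_gradedInvCochains_bot_succ (m : ℕ) :
    cohomologyRank listD (gradedInvCochains k (⊥ : Subgroup G)) (m + 1) = 0 := by
  refine subquotRank_eq_zero ?_
  rintro f ⟨hf, hdf⟩
  refine ⟨fun l => f (1 :: l), ⟨⟨apply_eq_zero_of_mem_gradedInvCochains hf (by simp), ?_⟩, ?_⟩, ?_⟩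
  · rintro g rfl
    exact listTranslate_one _
  · funext l
    by_cases hl : l.length = m + 1
    · simp [lengthTrunc_apply, hl]
    · simp [lengthTrunc_apply, hl, apply_eq_zero_of_mem_gradedInvCochains hf]
  · have hcone := listD_comp_cons f 1
    rw [LinearMap.mem_ker.1 hdf] at hcone
    exact (sub_eq_zero.1 hcone.symm).symm

theorem cohomologyRank_gradedInvCochains_eq {L : Subgroup G} (hKL : K ≤ L)
    (h : IsQuasiIsoIn listD (invCochains k L) (invCochains k K)) (m : ℕ) :
    cohomologyRank listD (gradedInvCochains k L) m =
      cohomologyRank listD (gradedInvCochains k K) m := by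
  have hle : ∀ n, gradedInvCochains k L n ≤ gradedInvCochains k K n := fun n =>
    inf_le_inf_right _ (invCochains_anti hKL)
  let Z (H : Subgroup G) := gradedInvCochains k H (m + 1) ⊓ LinearMap.ker listD
  let B (H : Subgroup G) := (gradedInvCochains k H m).map listD
  have hBZ : ∀ H, B H ≤ Z H := by
    rintro H _ ⟨x, hx, rfl⟩
    exact ⟨listD_mem_gradedInvCochains hx, listD_listD x⟩
  have hsurj : Z L ⊔ B K = Z K := by
    refine le_antisymm (sup_le (inf_le_inf_right _ (hle _)) (hBZ K)) ?_
    rintro x ⟨hx, hdx⟩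
    obtain ⟨y, hy, hxy⟩ := h.exists_sub_mem x hx.1 (by simp [LinearMap.mem_ker.1 hdx])
    have hxy' : lengthTrunc (m + 1) (x - listD y) = x - listD (lengthTrunc m y) := by
      rw [map_sub, hx.2, listD_lengthTrunc, LinearMap.id_apply]
    refine Submodule.mem_sup.2 ⟨_, ⟨hxy' ▸ lengthTrunc_mem_gradedInvCochains hxy _, ?_⟩, _,
      ⟨_, lengthTrunc_mem_gradedInvCochains hy m, rfl⟩, sub_add_cancel _ _⟩
    rw [SetLike.mem_coe, LinearMap.mem_ker, map_sub, LinearMap.mem_ker.1 hdx, listD_listD, sub_zero]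
  have hinj : Z L ⊓ B K = B L := by
    refine le_antisymm ?_ (le_inf (hBZ L) (Submodule.map_mono (hle m)))
    rintro _ ⟨⟨hdx, -⟩, x, hx, rfl⟩
    obtain ⟨y, -, hxy⟩ := h.exists_sub_mem x hx.1 hdx.1
    refine ⟨_, lengthTrunc_mem_gradedInvCochains hxy m, ?_⟩
    rw [listD_lengthTrunc, map_sub, listD_listD, sub_zero]
    exact hdx.2
  calc subquotRank (Z L) (B L) = subquotRank (Z L) (B K) := by rw [← hinj, subquotRank_inf_right]
    _ = subquotRank (Z K) (B K) := by rw [← subquotRank_sup_left, hsurj]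

theorem exists_add_one_sub_eq {A : Type*} [AddCommGroup A] (a : ℤ → A) :
    ∃ s : ℤ → A, ∀ n, s (n + 1) - s n = a n := by
  refine ⟨fun n => ∑ i ∈ Finset.Ico 0 n, a i - ∑ i ∈ Finset.Ico n 0, a i, fun n => ?_⟩
  rcases le_or_gt 0 n with hn | hn
  · have hinsert : Finset.Ico 0 (n + 1) = insert n (Finset.Ico 0 n) := by grind
    beta_reduce
    rw [hinsert, Finset.sum_insert Finset.right_notMem_Ico, Finset.Ico_eq_empty_of_le hn,
      Finset.Ico_eq_empty_of_le (hn.trans (Int.le_add_one le_rfl))]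
    simp
  · have hinsert : Finset.Ico n 0 = insert n (Finset.Ico (n + 1) 0) := by grind
    beta_reduce
    rw [hinsert, Finset.sum_insert (by simp), Finset.Ico_eq_empty_of_le hn.le,
      Finset.Ico_eq_empty_of_le (Int.add_one_le_iff.2 hn)]
    simp

/-- The pair `t, ξ` splits off the direction `t` from `K`: the element `t` centralizes `K`, and the
function `ξ` is invariant under `K` and counts the translations by `t`. -/
structure IsSplitDirection (K : Subgroup G) (t : G) (ξ : G → ℤ) : Prop where
  comm : ∀ g ∈ K, t * g = g * t
  apply_mul : ∀ g ∈ K, ∀ x, ξ (g * x) = ξ x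
  apply_self_mul : ∀ x, ξ (t * x) = ξ x + 1

namespace IsSplitDirection

variable {t : G} {ξ : G → ℤ} (h : IsSplitDirection K t ξ)
include h

theorem exists_listTranslate_sub_eq (hf : f ∈ invCochains k K) :
    ∃ y ∈ invCochains k K, listTranslate t y - y = f := by
  choose S hS using exists_add_one_sub_eq (A := k)
  let y : List G → k
    | [] => 0
    | x :: u => S (fun i => listTranslate (t ^ (i - ξ x)) f (x :: u)) (ξ x)
  have hy (g x : G) (u : List G) : listTranslate g y (x :: u) =
      S (fun i => listTranslate g (listTranslate (t ^ (i - ξ (g * x))) f) (x :: u)) (ξ (g * x)) :=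
    rfl
  refine ⟨y, ⟨rfl, fun g hg => funext fun l => ?_⟩, funext fun l => ?_⟩
  · cases l with
    | nil => rfl
    | cons x u =>
      rw [hy, h.apply_mul g hg]
      refine congrArg (S · (ξ x)) (funext fun i => ?_)
      have ht (g : G) (hg : g ∈ K) : Commute (t ^ (i - ξ x)) g := Commute.zpow_left (h.comm g hg) _
      rw [(listTranslate_mem_invCochains ht hf).2 hg]
  · cases l with
    | nil => exact (sub_self _).trans hf.1.symm
    | cons x u =>
      have hshift (i : ℤ) : t ^ (i - (ξ x + 1)) * t = t ^ (i - ξ x) := by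
        rw [← zpow_add_one, sub_add_eq_sub_sub, sub_add_cancel]
      rw [Pi.sub_apply, hy, h.apply_self_mul]
      simp only [listTranslate_translate, hshift]
      exact (hS _ _).trans (by rw [sub_self, zpow_zero, listTranslate_one])

theorem isNullSurjection :
    IsNullSurjection listD (listTranslate t - LinearMap.id) (gradedInvCochains k K) where
  d_d := listD_listD
  d_comm x := by
    simp only [LinearMap.sub_apply, map_sub, listTranslate, listD_listPullback, LinearMap.id_apply]
  map_d_le m := Submodule.map_le_iff_le_comap.2 fun f hf => listD_mem_gradedInvCochains hf
  map_eq m := by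
    have htrunc (f : List G → k) :
        lengthTrunc m (listTranslate t f - f) =
          listTranslate t (lengthTrunc m f) - lengthTrunc m f := by
      rw [map_sub, listTranslate, lengthTrunc_listPullback]
    refine le_antisymm (Submodule.map_le_iff_le_comap.2 fun f hf => ⟨?_, ?_⟩) fun f hf => ?_
    · exact sub_mem (listTranslate_mem_invCochains h.comm hf.1) hf.1
    · exact (htrunc f).trans (by rw [hf.2]; rfl)
    · obtain ⟨y, hy, hyf⟩ := h.exists_listTranslate_sub_eq hf.1
      refine ⟨_, lengthTrunc_mem_gradedInvCochains hy m, (htrunc y).symm.trans ?_⟩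
      rw [hyf]
      exact hf.2
  exists_eq_d m f hf hdf := by
    refine ⟨listPrism (t * ·) f, mem_gradedInvCochains_iff.2
      ⟨listPrism_mem_invCochains (fun g hg x => ?_) hf.1, ?_⟩,
      (listD_listPrism_of_closed _ hdf).symm⟩
    · rw [← mul_assoc, h.comm g hg, mul_assoc]
    · rw [← listPrism_lengthTrunc, (mem_gradedInvCochains_iff.1 hf).2]

omit h in
theorem gradedInvCochains_inf_ker (K : Subgroup G) (t : G) (m : ℕ) :
    gradedInvCochains k K m ⊓ LinearMap.ker (listTranslate t - LinearMap.id) =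
      gradedInvCochains k (K ⊔ Subgroup.zpowers t) m := by
  ext f
  have ht : f ∈ LinearMap.ker (listTranslate t - LinearMap.id) ↔ t ∈ cochainStabilizer f := by
    rw [LinearMap.mem_ker, LinearMap.sub_apply, sub_eq_zero]
    rfl
  rw [Submodule.mem_inf, ht, ← Subgroup.zpowers_le, mem_gradedInvCochains_iff,
    mem_gradedInvCochains_iff]
  constructor
  · rintro ⟨⟨hf, hm⟩, ht⟩
    exact ⟨⟨hf.1, sup_le hf.2 ht⟩, hm⟩
  · rintro ⟨hf, hm⟩
    exact ⟨⟨⟨hf.1, le_sup_left.trans hf.2⟩, hm⟩, le_sup_right.trans hf.2⟩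

theorem cohomologyRank_sup_zpowers_succ (m : ℕ) :
    cohomologyRank listD (gradedInvCochains k (K ⊔ Subgroup.zpowers t)) (m + 1) =
      cohomologyRank listD (gradedInvCochains k K) (m + 1) +
        cohomologyRank listD (gradedInvCochains k K) m := by
  rw [← h.isNullSurjection.cohomologyRank_inf_ker_succ m,
    funext (gradedInvCochains_inf_ker (k := k) K t)]

end IsSplitDirection

theorem cohomologyRank_closure_image {ι : Type*} [DecidableEq ι] {b : ι → G} {ξ : ι → G → ℤ}
    (hb : ∀ i j, Commute (b i) (b j))
    (hξ : ∀ i j x, ξ i (b j * x) = ξ i x + if i = j then 1 else 0) (s : Finset ι) :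
    ∀ m, cohomologyRank listD (gradedInvCochains k (Subgroup.closure (b '' s))) m =
      (s.card.choose m : ℕ) := by
  induction s using Finset.induction_on with
  | empty =>
    intro m
    rw [Finset.coe_empty, Set.image_empty, Subgroup.closure_empty]
    cases m with
    | zero => simp [cohomologyRank_gradedInvCochains_zero]
    | succ m => simp [cohomologyRank_gradedInvCochains_bot_succ]
  | insert i s hi ih =>
    have hsplit : IsSplitDirection (Subgroup.closure (b '' s)) (b i) (ξ i) := by
      refine ⟨fun g hg => ?_, fun g hg => ?_, fun x => by simp [hξ]⟩
      · have hle : Subgroup.closure (b '' s) ≤ Subgroup.centralizer {b i} := by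
          refine (Subgroup.closure_le _).2 ?_
          rintro _ ⟨j, -, rfl⟩
          exact Subgroup.mem_centralizer_singleton_iff.2 (hb j i)
        exact (Subgroup.mem_centralizer_singleton_iff.1 (hle hg)).symm
      · induction hg using Subgroup.closure_induction with
        | mem g hg =>
          obtain ⟨j, hj, rfl⟩ := hg
          simp [hξ, (ne_of_mem_of_not_mem hj hi).symm]
        | one => exact fun x => by rw [one_mul]
        | mul g g' _ _ ihg ihg' => exact fun x => by rw [mul_assoc, ihg, ihg']
        | inv g _ ihg => exact fun x => by rw [← ihg, mul_inv_cancel_left]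
    intro m
    cases m with
    | zero => simp [cohomologyRank_gradedInvCochains_zero]
    | succ m =>
      rw [Finset.coe_insert, Set.image_insert_eq, Set.insert_eq, Set.union_comm,
        Subgroup.closure_union, ← Subgroup.zpowers_eq_closure,
        hsplit.cohomologyRank_sup_zpowers_succ, ih, ih, Finset.card_insert_of_notMem hi,
        Nat.choose_succ_succ, Nat.cast_add, add_comm]

end GradedInvCochains

section RankGroupCohomology

universe v

variable {k G : Type v} [Field k] [Group G]

theorem disjoint_gradedInvCochains_ker_toInhomogeneous (n : ℕ) :
    Disjoint (gradedInvCochains k (⊤ : Subgroup G) (n + 1))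
      (LinearMap.ker (toInhomogeneous (k := k) (G := G) n)) := by
  refine Submodule.disjoint_def.2 fun f hf hker => ?_
  rw [← (mem_gradedInvCochains_iff.1 hf).2, ← ofInhomogeneous_toInhomogeneous n hf.1,
    LinearMap.mem_ker.1 hker, map_zero]

theorem ker_sc_g_inhomogeneousCochains (n : ℕ) :
    LinearMap.ker ((inhomogeneousCochains (Rep.trivial k G k)).sc n).g.hom =
      (gradedInvCochains k (⊤ : Subgroup G) (n + 1) ⊓ LinearMap.ker listD).map
        (toInhomogeneous n) := by
  ext f
  refine (mem_ker_sc_g_inhomogeneousCochains_iff n f).trans ⟨fun hf => ?_, ?_⟩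
  · exact ⟨_, ⟨mem_gradedInvCochains_iff.2
      ⟨ofInhomogeneous_mem_invCochains n f, lengthTrunc_ofInhomogeneous n f⟩, hf⟩,
      toInhomogeneous_ofInhomogeneous n f⟩
  · rintro ⟨F, ⟨hF, hdF⟩, rfl⟩
    rw [ofInhomogeneous_toInhomogeneous n hF.1, (mem_gradedInvCochains_iff.1 hF).2]
    exact hdF

theorem range_sc_f_inhomogeneousCochains (n : ℕ) :
    LinearMap.range ((inhomogeneousCochains (Rep.trivial k G k)).sc n).f.hom =
      ((gradedInvCochains k (⊤ : Subgroup G) n).map listD).map (toInhomogeneous n) := by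
  ext f
  refine (mem_range_sc_f_inhomogeneousCochains_iff n f).trans ⟨?_, ?_⟩
  · rintro ⟨F, hF, rfl⟩
    refine ⟨_, ⟨_, lengthTrunc_mem_gradedInvCochains hF n, rfl⟩, ?_⟩
    funext g
    rw [listD_lengthTrunc]
    exact if_pos List.length_ofFn
  · rintro ⟨_, ⟨F, hF, rfl⟩, rfl⟩
    exact ⟨F, hF.1, rfl⟩

theorem rank_groupCohomology_trivial (n : ℕ) :
    Module.rank k (groupCohomology (Rep.trivial k G k) n) =
      cohomologyRank listD (gradedInvCochains k (⊤ : Subgroup G)) n := by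
  have hle : (gradedInvCochains k (⊤ : Subgroup G) n).map listD ≤
      gradedInvCochains k ⊤ (n + 1) ⊓ LinearMap.ker listD := by
    rintro _ ⟨x, hx, rfl⟩
    exact ⟨listD_mem_gradedInvCochains hx, listD_listD x⟩
  have hdisj := (disjoint_gradedInvCochains_ker_toInhomogeneous (k := k) (G := G) n).mono_left
    (inf_le_left (b := LinearMap.ker listD))
  rw [cohomologyRank, ← subquotRank_map_of_disjoint _ hle hdisj]
  exact (rank_homology_eq_subquotRank _).trans <| congrArg₂ subquotRank
    (ker_sc_g_inhomogeneousCochains n) (range_sc_f_inhomogeneousCochains n)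

end RankGroupCohomology

/-! ### The adjoint group of the Coxeter quandle -/

section Dihedral

variable {G : Type*} [Group G] {a b : G}

theorem conj_mul_pow_right (ha : a ^ 2 = 1) (hb : b ^ 2 = 1) (n : ℕ) :
    (a * b) ^ n * b * ((a * b) ^ n)⁻¹ = (a * b) ^ (2 * n) * b := by
  have hsemiconj : SemiconjBy b (a * b)⁻¹ (a * b) := by
    rw [SemiconjBy, mul_inv_rev, mul_inv_cancel_left, mul_assoc, ← pow_two, hb, mul_one,
      inv_eq_iff_mul_eq_one, ← pow_two, ha]
  rw [mul_assoc, ← inv_pow, (hsemiconj.pow_right n).eq, ← mul_assoc, two_mul, pow_add]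

theorem conj_mul_pow_left (ha : a ^ 2 = 1) (hb : b ^ 2 = 1) (n : ℕ) :
    (a * b) ^ n * a * ((a * b) ^ n)⁻¹ = (a * b) ^ (2 * n + 1) * b := by
  have hab : a = a * b * b := by rw [mul_assoc, ← pow_two, hb, mul_one]
  calc (a * b) ^ n * a * ((a * b) ^ n)⁻¹
      = (a * b) ^ n * (a * b * b) * ((a * b) ^ n)⁻¹ := by rw [← hab]
    _ = a * b * ((a * b) ^ n * b * ((a * b) ^ n)⁻¹) := by
        rw [← mul_assoc, ← pow_succ, pow_succ']
        simp only [mul_assoc]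
    _ = (a * b) ^ (2 * n + 1) * b := by
        rw [conj_mul_pow_right ha hb, ← mul_assoc, ← pow_succ']

end Dihedral

theorem closure_range_toEnvelGroup (R : Type*) [Rack R] :
    Subgroup.closure (Set.range (toEnvelGroup R) : Set (EnvelGroup R)) = ⊤ := by
  refine eq_top_iff.2 fun g _ => ?_
  induction g using Quotient.inductionOn with
  | h a =>
    induction a with
    | unit => exact one_mem _
    | incl x => exact Subgroup.subset_closure ⟨x, rfl⟩
    | mul a b ha hb => exact mul_mem (ha trivial) (hb trivial)
    | inv a ha => exact inv_mem (ha trivial)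

namespace CoxeterQuandle

variable {I W' : Type} [Group W'] {N : CoxeterMatrix I} {cs : CoxeterSystem N W'}

/-- The group `W` acts on its reflections by conjugation. -/
instance : MulAction W' (CoxeterQuandle cs) where
  smul w x := ⟨w * x.1 * w⁻¹, x.2.conj w⟩
  one_smul x := Subtype.ext (by simp [HSMul.hSMul])
  mul_smul v w x := Subtype.ext (by simp [HSMul.hSMul, mul_assoc])

theorem coe_sq (x : CoxeterQuandle cs) : x.1 ^ 2 = 1 := x.2.pow_two

variable (cs) in
/-- A simple reflection, as an element of the Coxeter quandle. -/
def simple (i : I) : CoxeterQuandle cs := ⟨cs.simple i, cs.isReflection_simple i⟩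

theorem exists_eq_smul_simple (x : CoxeterQuandle cs) :
    ∃ (w : W') (i : I), x = w • simple cs i :=
  let ⟨w, i, hx⟩ := x.2
  ⟨w, i, Subtype.ext hx⟩

theorem coxE_conj_coxE (x y : CoxeterQuandle cs) :
    coxE cs x * coxE cs y * (coxE cs x)⁻¹ = coxE cs (x.1 • y) :=
  ((toEnvelGroup (CoxeterQuandle cs)).map_act (x := x) (y := y)).symm

section KernelBound

variable {φ : EnvelGroup (CoxeterQuandle cs) →* W'}
  (hφ : ∀ x : CoxeterQuandle cs, φ (coxE cs x) = x.1)
include hφ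

theorem conj_coxE (g : EnvelGroup (CoxeterQuandle cs)) (y : CoxeterQuandle cs) :
    g * coxE cs y * g⁻¹ = coxE cs (φ g • y) := by
  have hg : g ∈ Subgroup.closure (Set.range (coxE cs)) :=
    (closure_range_toEnvelGroup (CoxeterQuandle cs)).ge (Subgroup.mem_top g)
  induction hg using Subgroup.closure_induction generalizing y with
  | mem _ hx =>
    obtain ⟨x, rfl⟩ := hx
    rw [hφ, coxE_conj_coxE]
  | one => rw [map_one, one_smul, one_mul, inv_one, mul_one]
  | mul a b _ _ ha hb =>
    rw [map_mul, mul_smul, ← ha, ← hb]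
    group
  | inv a _ ha =>
    have hy := ha ((φ a)⁻¹ • y)
    rw [smul_inv_smul] at hy
    rw [map_inv, ← hy]
    group

theorem surjective_of_map_coxE : Function.Surjective φ := by
  rw [← MonoidHom.range_eq_top, eq_top_iff, ← cs.subgroup_closure_range_simple,
    Subgroup.closure_le]
  rintro _ ⟨i, rfl⟩
  exact ⟨coxE cs (simple cs i), hφ _⟩

theorem ker_le_center : φ.ker ≤ Subgroup.center (EnvelGroup (CoxeterQuandle cs)) := by
  intro z hz
  have hle : Subgroup.closure (Set.range (coxE cs)) ≤ Subgroup.centralizer {z} := by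
    rw [Subgroup.closure_le]
    rintro _ ⟨x, rfl⟩
    have hconj := conj_coxE hφ z x
    rw [MonoidHom.mem_ker.1 hz, one_smul, mul_inv_eq_iff_eq_mul] at hconj
    exact Subgroup.mem_centralizer_singleton_iff.2 hconj.symm
  refine Subgroup.mem_center_iff.2 fun g => Subgroup.mem_centralizer_singleton_iff.1 (hle ?_)
  exact (closure_range_toEnvelGroup (CoxeterQuandle cs)).ge (Subgroup.mem_top g)

theorem coxE_sq_mem_ker (x : CoxeterQuandle cs) : coxE cs x ^ 2 ∈ φ.ker := by
  rw [MonoidHom.mem_ker, map_pow, hφ, x.coe_sq]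

theorem coxE_smul_sq (w : W') (x : CoxeterQuandle cs) : coxE cs (w • x) ^ 2 = coxE cs x ^ 2 := by
  obtain ⟨g, rfl⟩ := surjective_of_map_coxE hφ w
  rw [← conj_coxE hφ, conj_pow, mul_inv_eq_iff_eq_mul]
  exact Subgroup.mem_center_iff.1 (ker_le_center hφ (coxE_sq_mem_ker hφ x)) g

theorem closure_range_coxE_simple :
    Subgroup.closure (Set.range fun i => coxE cs (simple cs i)) = ⊤ := by
  set H := Subgroup.closure (Set.range fun i => coxE cs (simple cs i)) with hH
  have hmap : H.map φ = ⊤ := by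
    rw [hH, MonoidHom.map_closure, ← Set.range_comp, ← cs.subgroup_closure_range_simple]
    exact congrArg (fun f => Subgroup.closure (Set.range f)) (funext fun i => hφ _)
  refine top_le_iff.1 <| (closure_range_toEnvelGroup (CoxeterQuandle cs)).ge.trans <|
    (Subgroup.closure_le _).2 ?_
  rintro _ ⟨x, rfl⟩
  obtain ⟨w, i, rfl⟩ := exists_eq_smul_simple x
  obtain ⟨g, hg, rfl⟩ := hmap.ge (Subgroup.mem_top w)
  have hi : coxE cs (simple cs i) ∈ H := Subgroup.subset_closure ⟨i, rfl⟩
  have hconj := mul_mem (mul_mem hg hi) (inv_mem hg)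
  rwa [conj_coxE hφ] at hconj

variable {K : Subgroup (EnvelGroup (CoxeterQuandle cs))} [K.Normal]
  (hK : ∀ x, coxE cs x ^ 2 ∈ K)
include hK

-- Conjugating `e_x` or `e_y` by a power of `e_x e_y` yields `e_y` on the one hand, as it does so
-- in `W'`, and `(e_x e_y) ^ m e_y` modulo `K` on the other.
theorem mk_coxE_mul_coxE_pow {x y : CoxeterQuandle cs} {m : ℕ} (hxy : (x.1 * y.1) ^ m = 1) :
    ((coxE cs x : EnvelGroup (CoxeterQuandle cs) ⧸ K) * coxE cs y) ^ m = 1 := by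
  have hsq (z : CoxeterQuandle cs) : (coxE cs z : EnvelGroup (CoxeterQuandle cs) ⧸ K) ^ 2 = 1 :=
    (QuotientGroup.eq_one_iff _).2 (hK z)
  have hmk (n : ℕ) {z : CoxeterQuandle cs} (hz : (x.1 * y.1) ^ n • z = y) :
      ((coxE cs x : EnvelGroup (CoxeterQuandle cs) ⧸ K) * coxE cs y) ^ n * coxE cs z *
        ((coxE cs x * coxE cs y : EnvelGroup (CoxeterQuandle cs) ⧸ K) ^ n)⁻¹ = coxE cs y := by
    have hconj := conj_coxE hφ ((coxE cs x * coxE cs y) ^ n) z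
    rw [map_pow, map_mul, hφ, hφ, hz] at hconj
    exact congrArg (QuotientGroup.mk' K) hconj
  obtain ⟨n, rfl | rfl⟩ := m.even_or_odd'
  · refine mul_eq_right.1 ((conj_mul_pow_right (hsq x) (hsq y) n).symm.trans (hmk n ?_))
    exact Subtype.ext <| (conj_mul_pow_right x.coe_sq y.coe_sq n).trans (by rw [hxy, one_mul])
  · refine mul_eq_right.1 ((conj_mul_pow_left (hsq x) (hsq y) n).symm.trans (hmk n ?_))
    exact Subtype.ext <| (conj_mul_pow_left x.coe_sq y.coe_sq n).trans (by rw [hxy, one_mul])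

theorem ker_le_of_coxE_sq_mem : φ.ker ≤ K := by
  let ψ : W' →* EnvelGroup (CoxeterQuandle cs) ⧸ K := cs.lift
    ⟨fun i => coxE cs (simple cs i), fun i j =>
      mk_coxE_mul_coxE_pow hφ hK (cs.simple_mul_simple_pow i j)⟩
  have hψ : ψ.comp φ = QuotientGroup.mk' K := by
    refine MonoidHom.eq_of_eqOn_dense (closure_range_coxE_simple hφ) ?_
    rintro _ ⟨i, rfl⟩
    rw [MonoidHom.comp_apply, hφ]
    exact cs.lift_apply_simple _ i
  calc φ.ker ≤ (ψ.comp φ).ker := fun g hg => by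
        rw [MonoidHom.mem_ker, MonoidHom.comp_apply, MonoidHom.mem_ker.1 hg, map_one]
    _ = K := by rw [hψ, QuotientGroup.ker_mk']

end KernelBound

variable (cs) in
/-- The conjugacy classes of reflections of `W`, whose number is `c(W)`. -/
abbrev ReflectionClass : Type :=
  {c : ConjClasses W' // ∃ t : W', cs.IsReflection t ∧ ConjClasses.mk t = c}

/-- The conjugacy class of a reflection. -/
def reflectionClass (x : CoxeterQuandle cs) : ReflectionClass cs :=
  ⟨ConjClasses.mk x.1, x.1, x.2, rfl⟩

theorem reflectionClass_surjective : Function.Surjective (reflectionClass (cs := cs)) := by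
  rintro ⟨_, t, ht, rfl⟩
  exact ⟨⟨t, ht⟩, rfl⟩

theorem reflectionClass_eq_iff {x y : CoxeterQuandle cs} :
    reflectionClass x = reflectionClass y ↔ ∃ w : W', w • x = y := by
  rw [Subtype.ext_iff]
  exact ConjClasses.mk_eq_mk_iff_isConj.trans <| isConj_iff.trans <|
    exists_congr fun w => (Subtype.ext_iff (a1 := w • x)).symm

instance [Finite I] : Finite (ReflectionClass cs) := by
  refine Finite.of_surjective (fun i => reflectionClass (simple cs i)) fun c => ?_
  obtain ⟨x, rfl⟩ := reflectionClass_surjective c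
  obtain ⟨w, i, rfl⟩ := exists_eq_smul_simple x
  exact ⟨i, reflectionClass_eq_iff.2 ⟨w, rfl⟩⟩

variable (cs) in
open Classical in
/-- The homomorphism `Ad(Q_W) → ℤ` sending `e_x` to `1` if `x` is in the class `c`, and to `0`
otherwise. -/
noncomputable def classDegree (c : ReflectionClass cs) :
    EnvelGroup (CoxeterQuandle cs) →* Multiplicative ℤ :=
  toEnvelGroup.map
    { toFun := fun x => (Multiplicative.ofAdd (if c = reflectionClass x then 1 else 0) :
        Multiplicative ℤ)
      map_act' := fun {x y} => by
        have hclass : reflectionClass (x ◃ y) = reflectionClass y :=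
          (reflectionClass_eq_iff.2 ⟨x.1, rfl⟩).symm
        rw [hclass, Quandle.conj_act_eq_conj]
        exact (mul_inv_cancel_comm (G := Multiplicative ℤ) _ _).symm }

open Classical in
theorem classDegree_coxE (c : ReflectionClass cs) (x : CoxeterQuandle cs) :
    classDegree cs c (coxE cs x) =
      Multiplicative.ofAdd (if c = reflectionClass x then 1 else 0 : ℤ) := rfl

variable (cs) in
/-- The square of `e_x`, for a chosen reflection `x` in the class `c`. -/
noncomputable def classSquare (c : ReflectionClass cs) : EnvelGroup (CoxeterQuandle cs) :=
  coxE cs (Function.surjInv reflectionClass_surjective c) ^ 2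

open Classical in
theorem toAdd_classDegree_classSquare_mul (c c' : ReflectionClass cs)
    (g : EnvelGroup (CoxeterQuandle cs)) :
    (classDegree cs c (classSquare cs c' * g)).toAdd / 2 =
      (classDegree cs c g).toAdd / 2 + if c = c' then 1 else 0 := by
  rw [classSquare, map_mul, map_pow, classDegree_coxE,
    Function.surjInv_eq reflectionClass_surjective, toAdd_mul, toAdd_pow, toAdd_ofAdd,
    two_nsmul]
  split_ifs <;> omega

variable {φ : EnvelGroup (CoxeterQuandle cs) →* W'}
  (hφ : ∀ x : CoxeterQuandle cs, φ (coxE cs x) = x.1)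
include hφ

theorem coxE_sq_eq_classSquare (x : CoxeterQuandle cs) :
    coxE cs x ^ 2 = classSquare cs (reflectionClass x) := by
  obtain ⟨w, hw⟩ := reflectionClass_eq_iff.1
    (Function.surjInv_eq reflectionClass_surjective (reflectionClass x))
  rw [classSquare, ← coxE_smul_sq hφ w (Function.surjInv _ _), hw]

theorem classSquare_mem_ker (c : ReflectionClass cs) : classSquare cs c ∈ φ.ker :=
  coxE_sq_mem_ker hφ _

theorem commute_classSquare (c c' : ReflectionClass cs) :
    Commute (classSquare cs c) (classSquare cs c') :=
  Subgroup.mem_center_iff.1 (ker_le_center hφ (classSquare_mem_ker hφ c')) _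

theorem closure_range_classSquare : Subgroup.closure (Set.range (classSquare cs)) = φ.ker := by
  have hle : Subgroup.closure (Set.range (classSquare cs)) ≤ φ.ker := by
    rw [Subgroup.closure_le]
    rintro _ ⟨c, rfl⟩
    exact classSquare_mem_ker hφ c
  have hnormal : (Subgroup.closure (Set.range (classSquare cs))).Normal := ⟨fun n hn g => by
    rwa [Subgroup.mem_center_iff.1 (ker_le_center hφ (hle hn)) g, mul_inv_cancel_right]⟩
  exact hle.antisymm <| ker_le_of_coxE_sq_mem hφ fun x =>
    Subgroup.subset_closure ⟨_, (coxE_sq_eq_classSquare hφ x).symm⟩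

theorem cohomologyRank_gradedInvCochains_ker {k : Type} [Field k] [Finite I] (n : ℕ) :
    cohomologyRank listD (gradedInvCochains k φ.ker) n =
      ((Nat.card (ReflectionClass cs)).choose n : ℕ) := by
  classical
  have := Fintype.ofFinite (ReflectionClass cs)
  have hrank := cohomologyRank_closure_image (k := k)
    (ξ := fun c g => (classDegree cs c g).toAdd / 2) (commute_classSquare hφ)
    toAdd_classDegree_classSquare_mul Finset.univ n
  rwa [Finset.coe_univ, Set.image_univ, closure_range_classSquare hφ, Finset.card_univ,
    ← Nat.card_eq_fintype_card] at hrank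

end CoxeterQuandle

/-- For every `n ≥ 0`, the restriction map `Hⁿ(Ad(Q_W), ℚ) → Hⁿ(C_W, ℚ)` in group
cohomology (trivial coefficients) induced by the inclusion `C_W ↪ Ad(Q_W)` is an
isomorphism; consequently `H*(Ad(Q_W), ℚ)` is isomorphic to an exterior `ℚ`-algebra on
`c(W)` generators of degree `1`, i.e. `Hⁿ(Ad(Q_W), ℚ)` has dimension `c(W).choose n`. -/
theorem stmt_11 (cs : CoxeterSystem M W)
    (φ : EnvelGroup (CoxeterQuandle cs) →* W)
    (hφ : ∀ x : CoxeterQuandle cs, φ (coxE cs x) = x.1) :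
    (∀ n : ℕ, CategoryTheory.IsIso (HomologicalComplex.homologyMap (cochainsRes φ.ker.subtype) n)) ∧
    (∀ n : ℕ,
      Module.finrank ℚ
        (groupCohomology (Rep.trivial ℚ (EnvelGroup (CoxeterQuandle cs)) ℚ) n) =
      (Nat.card {c : ConjClasses W // ∃ t : W, cs.IsReflection t ∧ ConjClasses.mk t = c}).choose
        n) := by
  have hquasiIso := isQuasiIsoIn_invCochains_top (k := ℚ) cs
    (CoxeterQuandle.surjective_of_map_coxE hφ) (CoxeterQuandle.ker_le_center hφ)
  refine ⟨isIso_homologyMap_cochainsRes hquasiIso, fun n => Module.finrank_eq_of_rank_eq ?_⟩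
  rw [rank_groupCohomology_trivial, cohomologyRank_gradedInvCochains_eq le_top hquasiIso,
    CoxeterQuandle.cohomologyRank_gradedInvCochains_ker hφ]
end

section
/- The central extension 1 → C_W → Ad(Q_W) → W → 1 is nontrivial; in fact there is no group isomorphism between Ad(Q_W) and the direct product C_W × W (equivalently, Ad(Q_W) is not isomorphic to ℤ^{c(W)} × W). -/
open Quandles Rack CoxeterSystem

variable {B : Type} [Fintype B] {W : Type} [Group W] {M : CoxeterMatrix B}

/-!
The abelianization of the enveloping group `Ad(R)` of a rack is free abelian on the orbits of `R`,
so homomorphisms from `Ad(R)` to a commutative group lift along surjections of commutative groups.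
Lifting to a torsion-free group shows that every such homomorphism kills the elements of finite
order. If a Coxeter group `W` were a direct factor of `Ad(R)`, then the parity character
`W → ℤ/2` would extend to `Ad(R)` without killing the simple reflections, which have order two.
-/

universe u

theorem exists_isMulTorsionFree_surjective (A : Type u) [CommGroup A] :
    ∃ (F : Type u) (_ : CommGroup F) (_ : IsMulTorsionFree F) (q : F →* A),
      Function.Surjective q :=
  ⟨Multiplicative (Additive A →₀ ℤ), inferInstance, inferInstance,
    AddMonoidHom.toMultiplicativeLeft
      (Finsupp.linearCombination ℤ (id : Additive A → Additive A)).toAddMonoidHom,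
    Finsupp.linearCombination_id_surjective ℤ (Additive A)⟩

section EnvelGroup

variable {R : Type*} [Rack R] {A F G : Type*} [CommGroup A] [CommGroup F] [Group G]

theorem map_toEnvelGroup_act (χ : EnvelGroup R →* A) (x y : R) :
    χ (toEnvelGroup R (x ◃ y)) = χ (toEnvelGroup R y) := by
  have act_eq_conj : toEnvelGroup R (x ◃ y) =
      (toEnvelGroup R x * toEnvelGroup R y * (toEnvelGroup R x)⁻¹ : EnvelGroup R) :=
    (toEnvelGroup R).map_act
  rw [act_eq_conj]
  exact (map_mul_inv χ _ _).trans (by rw [map_mul, mul_inv_cancel_comm])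

theorem envelGroup_hom_ext {χ ψ : EnvelGroup R →* G}
    (h : ∀ x, χ (toEnvelGroup R x) = ψ (toEnvelGroup R x)) : χ = ψ :=
  toEnvelGroup.map.symm.injective (ShelfHom.ext (funext h))

theorem exists_envelGroup_hom_of_act_invariant (l : R → A) (hl : ∀ x y, l (x ◃ y) = l y) :
    ∃ χ : EnvelGroup R →* A, ∀ x, χ (toEnvelGroup R x) = l x := by
  let f : R →◃ Quandle.Conj A :=
    { toFun := l
      map_act' := fun {x y} => (hl x y).trans (mul_inv_cancel_comm (l x) (l y)).symm }
  exact ⟨toEnvelGroup.map f, fun _ => rfl⟩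

theorem exists_envelGroup_lift_of_surjective (χ : EnvelGroup R →* A) {q : F →* A}
    (hq : Function.Surjective q) : ∃ ψ : EnvelGroup R →* F, q.comp ψ = χ := by
  obtain ⟨σ, hσ⟩ := hq.hasRightInverse
  obtain ⟨ψ, hψ⟩ := exists_envelGroup_hom_of_act_invariant (fun x => σ (χ (toEnvelGroup R x)))
    fun x y => congrArg σ (map_toEnvelGroup_act χ x y)
  exact ⟨ψ, envelGroup_hom_ext fun x => (congrArg q (hψ x)).trans (hσ _)⟩

theorem envelGroup_hom_eq_one_of_isOfFinOrder (χ : EnvelGroup R →* A) {g : EnvelGroup R}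
    (hg : IsOfFinOrder g) : χ g = 1 := by
  obtain ⟨F, _, _, q, hq⟩ := exists_isMulTorsionFree_surjective A
  obtain ⟨ψ, rfl⟩ := exists_envelGroup_lift_of_surjective χ hq
  have ψ_eq_one : ψ g = 1 := (isOfFinOrder_iff_eq_one _).1 (ψ.isOfFinOrder hg)
  rw [MonoidHom.comp_apply, ψ_eq_one, map_one]

theorem envelGroup_retract_hom_eq_one_of_isOfFinOrder {p : EnvelGroup R →* G}
    {s : G →* EnvelGroup R} (hps : p.comp s = MonoidHom.id G) (χ : G →* A) {g : G}
    (hg : IsOfFinOrder g) : χ g = 1 :=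
  calc
    χ g = χ (p (s g)) := congrArg χ (DFunLike.congr_fun hps g).symm
    _ = 1 := envelGroup_hom_eq_one_of_isOfFinOrder (χ.comp p) (s.isOfFinOrder hg)

end EnvelGroup

theorem envelGroup_comp_ne_id_of_coxeterSystem {R B W : Type*} [Rack R] [Nonempty B] [Group W]
    {M : CoxeterMatrix B} (cs : CoxeterSystem M W) (p : EnvelGroup R →* W)
    (s : W →* EnvelGroup R) : p.comp s ≠ MonoidHom.id W := by
  intro hps
  obtain ⟨i⟩ := ‹Nonempty B›
  have simple_isOfFinOrder : IsOfFinOrder (cs.simple i) :=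
    isOfFinOrder_iff_pow_eq_one.2 ⟨2, two_pos, cs.simple_sq i⟩
  have parity_eq_one : cs.lengthParity (cs.simple i) = 1 :=
    envelGroup_retract_hom_eq_one_of_isOfFinOrder hps cs.lengthParity simple_isOfFinOrder
  rw [cs.lengthParity_simple] at parity_eq_one
  exact absurd parity_eq_one (by decide)

theorem stmt_12_general {R B W : Type*} [Rack R] [Nonempty B] [Group W] {M : CoxeterMatrix B}
    (cs : CoxeterSystem M W) (A : Type*) [Group A] : IsEmpty (EnvelGroup R ≃* (A × W)) := by
  refine ⟨fun e => envelGroup_comp_ne_id_of_coxeterSystem cs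
    ((MonoidHom.snd A W).comp e.toMonoidHom) (e.symm.toMonoidHom.comp (MonoidHom.inr A W)) ?_⟩
  ext w
  exact congrArg Prod.snd (e.apply_symm_apply (1, w))

/-- The central extension `1 → C_W → Ad(Q_W) → W → 1` is nontrivial: there is no group
isomorphism between `Ad(Q_W)` and the direct product `C_W × W`; equivalently, `Ad(Q_W)` is
not isomorphic to `ℤ^{c(W)} × W`, where `c(W)` is the number of conjugacy classes of
reflections. -/
theorem stmt_12 [Nonempty B] (cs : CoxeterSystem M W)
    (φ : EnvelGroup (CoxeterQuandle cs) →* W)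
    (hφ : ∀ x : CoxeterQuandle cs, φ (coxE cs x) = x.1) :
    IsEmpty (EnvelGroup (CoxeterQuandle cs) ≃* (φ.ker × W)) ∧
    IsEmpty (EnvelGroup (CoxeterQuandle cs) ≃*
      (Multiplicative
        ({c : ConjClasses W // ∃ t : W, cs.IsReflection t ∧ ConjClasses.mk t = c} → ℤ)
        × W)) :=
  ⟨stmt_12_general cs _, stmt_12_general cs _⟩
end

section
/- If all reflections of W are conjugate in W (that is, c(W) = 1), then the second group cohomology H²(W, ℤ) of W with trivial coefficients in ℤ is isomorphic to ℤ/2. -/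
/-!
A 2-cocycle `f` on a Coxeter group `W` with values in `ℤ` defines a central extension of `W` by
`ℤ`, and `f` is a coboundary exactly when this extension splits. The square of a lift of a
reflection `t` is an integer whose parity does not depend on the lift and only depends on the
conjugacy class of `t`. If all these parities vanish, then the simple reflections lift to
involutions `x i`. The element `(x i * x j) ^ M i j` is then central, while conjugation by `x i`
inverts it, so it is trivial because `ℤ` has no 2-torsion. Hence the `x i` satisfy the Coxeter
relations and the extension splits. Conversely, any prescribed parities extend to a character
`χ : W → ℤ/2`, and they are realized by the Bockstein of `χ`. Thus `H²(W, ℤ)` is the group of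
`ℤ/2`-valued functions on the set of conjugacy classes of reflections.
-/

open groupCohomology

universe u

theorem mul_pow_mul_self_eq_one_of_commute {E : Type*} [Group E] {x y : E} (hx : x * x = 1)
    (hy : y * y = 1) {n : ℕ} (hcomm : Commute x ((x * y) ^ n)) :
    (x * y) ^ n * (x * y) ^ n = 1 := by
  have x_inv : x⁻¹ = x := inv_eq_of_mul_eq_one_left hx
  have y_inv : y⁻¹ = y := inv_eq_of_mul_eq_one_left hy
  have conj_eq_inv : x * (x * y) ^ n * x⁻¹ = ((x * y) ^ n)⁻¹ := by
    rw [← conj_pow, ← inv_pow, mul_inv_rev, x_inv, y_inv, ← mul_assoc, hx, one_mul]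
  rw [hcomm.eq, mul_inv_cancel_right] at conj_eq_inv
  exact mul_eq_one_iff_eq_inv.2 conj_eq_inv

section CocycleExtension

variable {k G : Type u} [CommRing k] [Group G] {A : Rep k G}

/-- The extension of `G` by `A` with factor set the 2-cocycle `f`, on the underlying set `A × G`.
As `f` need not be normalized, the unit is `(-f (1, 1), 1)` and the inclusion of `A` is
`a ↦ (a - f (1, 1), 1)`. -/
@[ext]
structure CocycleExtension (f : cocycles₂ A) where
  fiber : A
  base : G

namespace CocycleExtension

variable {f : cocycles₂ A}

instance : Mul (CocycleExtension f) :=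
  ⟨fun x y ↦ ⟨x.fiber + A.ρ x.base y.fiber + f (x.base, y.base), x.base * y.base⟩⟩

instance : One (CocycleExtension f) := ⟨⟨-f (1, 1), 1⟩⟩

instance : Inv (CocycleExtension f) :=
  ⟨fun x ↦ ⟨-A.ρ x.base⁻¹ x.fiber - f (x.base⁻¹, x.base) - f (1, 1), x.base⁻¹⟩⟩

@[simp]
theorem mul_fiber (x y : CocycleExtension f) :
    (x * y).fiber = x.fiber + A.ρ x.base y.fiber + f (x.base, y.base) := rfl

@[simp]
theorem mul_base (x y : CocycleExtension f) : (x * y).base = x.base * y.base := rfl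

@[simp]
theorem one_fiber : (1 : CocycleExtension f).fiber = -f (1, 1) := rfl

@[simp]
theorem one_base : (1 : CocycleExtension f).base = 1 := rfl

@[simp]
theorem inv_fiber (x : CocycleExtension f) :
    x⁻¹.fiber = -A.ρ x.base⁻¹ x.fiber - f (x.base⁻¹, x.base) - f (1, 1) := rfl

@[simp]
theorem inv_base (x : CocycleExtension f) : x⁻¹.base = x.base⁻¹ := rfl

instance : Group (CocycleExtension f) :=
  Group.ofLeftAxioms
    (fun x y z ↦ by
      ext
      · have hf := (mem_cocycles₂_iff f).1 f.2 x.base y.base z.base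
        simp only [mul_fiber, mul_base, map_add, map_mul, Module.End.mul_apply]
        rw [eq_sub_of_add_eq hf]
        abel
      · exact mul_assoc _ _ _)
    (fun x ↦ by ext <;> simp [cocycles₂_map_one_fst])
    (fun x ↦ by
      ext
      · simp only [mul_fiber, inv_fiber, inv_base, one_fiber]
        abel
      · exact inv_mul_cancel _)

/-- The projection of the extension onto `G`. -/
def proj (f : cocycles₂ A) : CocycleExtension f →* G where
  toFun := base
  map_one' := rfl
  map_mul' _ _ := rfl

theorem mem_coboundaries₂_of_proj_comp_eq_id {σ : G →* CocycleExtension f}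
    (hσ : (proj f).comp σ = MonoidHom.id G) : ⇑f ∈ coboundaries₂ A := by
  have base_σ (g : G) : (σ g).base = g := DFunLike.congr_fun hσ g
  refine ⟨fun g ↦ -(σ g).fiber, funext fun ⟨g, h⟩ ↦ ?_⟩
  have fiber_σ := congrArg fiber (map_mul σ g h)
  simp only [mul_fiber, base_σ] at fiber_σ
  simp only [d₁₂_hom_apply, map_neg, fiber_σ]
  abel

theorem ker_proj_le_center [A.IsTrivial] :
    (proj f).ker ≤ Subgroup.center (CocycleExtension f) := by
  intro z hz
  replace hz : z.base = 1 := hz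
  refine Subgroup.mem_center_iff.2 fun x ↦ ?_
  ext
  · have f_one_left := cocycles₂_map_one_fst f x.base
    have f_one_right := cocycles₂_map_one_snd f x.base
    simp only [Representation.isTrivial_apply] at f_one_right
    simp only [mul_fiber, hz, Representation.isTrivial_apply, f_one_left, f_one_right]
    abel
  · simp [hz]

theorem eq_one_of_mem_ker_proj_of_mul_self [A.IsTrivial] [IsAddTorsionFree A]
    {z : CocycleExtension f} (hz : z ∈ (proj f).ker) (hzz : z * z = 1) : z = 1 := by
  replace hz : z.base = 1 := hz
  have fiber_eq := congrArg fiber hzz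
  simp only [mul_fiber, hz, Representation.isTrivial_apply, one_fiber] at fiber_eq
  ext
  · refine eq_neg_of_add_eq_zero_left (self_eq_neg.1 ?_)
    grind
  · exact hz

end CocycleExtension

/-- The linear map sending a 2-cocycle `f` to `f (t, t) + f (1, 1)`. For an involution `t` acting
trivially, this is the square of the lift `(0, t)` of `t` to the extension with factor set `f`,
as an element of the subgroup `A`. -/
def liftSquare (t : G) : cocycles₂ A →ₗ[k] A :=
  (LinearMap.proj (R := k) (φ := fun _ : G × G ↦ A) (t, t) + LinearMap.proj (1, 1)) ∘ₗ
    (cocycles₂ A).subtype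

theorem liftSquare_apply (t : G) (f : cocycles₂ A) : liftSquare t f = f (t, t) + f (1, 1) := rfl

variable [A.IsTrivial] {f : cocycles₂ A} {t u : G}

theorem even_liftSquare_of_mem_coboundaries₂ (ht : t * t = 1) (hf : ⇑f ∈ coboundaries₂ A) :
    Even (liftSquare t f) := by
  obtain ⟨x, hx⟩ := hf
  refine ⟨x t, ?_⟩
  simp only [liftSquare_apply, ← hx, d₁₂_hom_apply, Representation.isTrivial_apply, ht, one_mul]
  abel

theorem exists_involution_lift_of_even_liftSquare (ht : t * t = 1) (heven : Even (liftSquare t f)) :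
    ∃ x : CocycleExtension f, CocycleExtension.proj f x = t ∧ x * x = 1 := by
  obtain ⟨a, ha⟩ := heven
  refine ⟨⟨-a, t⟩, rfl, ?_⟩
  ext
  · simp only [CocycleExtension.mul_fiber, Representation.isTrivial_apply,
      CocycleExtension.one_fiber]
    rw [liftSquare_apply, ← eq_sub_iff_add_eq] at ha
    rw [ha]
    abel
  · exact ht

theorem even_liftSquare_sub_of_isConj (ht : t * t = 1) (htu : IsConj t u) :
    Even (liftSquare u f - liftSquare t f) := by
  obtain ⟨g, rfl⟩ := isConj_iff.1 htu
  let lift_t : CocycleExtension f := ⟨0, t⟩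
  let lift_g : CocycleExtension f := ⟨0, g⟩
  let y := lift_g * lift_t * lift_g⁻¹
  have y_base : y.base = g * t * g⁻¹ := rfl
  have sq_mem_center : lift_t * lift_t ∈ Subgroup.center (CocycleExtension f) :=
    CocycleExtension.ker_proj_le_center ht
  have sq_eq : y * y = lift_t * lift_t :=
    calc y * y = lift_g * (lift_t * lift_t) * lift_g⁻¹ := by simp only [y]; group
      _ = lift_t * lift_t := by
        rw [Subgroup.mem_center_iff.1 sq_mem_center, mul_inv_cancel_right]
  have fiber_eq := congrArg CocycleExtension.fiber sq_eq
  simp only [CocycleExtension.mul_fiber, Representation.isTrivial_apply, y_base, lift_t] at fiber_eq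
  refine ⟨-y.fiber, ?_⟩
  simp only [liftSquare_apply]
  grind

end CocycleExtension

section Bockstein

variable {G : Type} [Group G]

/-- The cocycle `(g, h) ↦ χ g * χ h`, computed with representatives of `χ g` and `χ h` in `{0, 1}`.
It represents the Bockstein of the character `χ`. -/
def bocksteinCocycle (χ : G →* Multiplicative (ZMod 2)) : cocycles₂ (Rep.trivial ℤ G ℤ) :=
  ⟨fun x ↦ ((χ x.1).toAdd.val * (χ x.2).toAdd.val : ℤ), by
    have cocycle_identity : ∀ a b c : ZMod 2,
        ((a + b).val * c.val + a.val * b.val : ℤ) = b.val * c.val + a.val * (b + c).val := by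
      decide
    refine (mem_cocycles₂_iff (A := Rep.trivial ℤ G ℤ) _).2 fun g h j ↦ ?_
    simp only [map_mul, toAdd_mul, Representation.isTrivial_apply]
    exact cocycle_identity _ _ _⟩

theorem liftSquare_bocksteinCocycle (χ : G →* Multiplicative (ZMod 2)) (t : G) :
    liftSquare t (bocksteinCocycle χ) = ((χ t).toAdd.val : ℤ) := by
  have sq_eq : ∀ a : ZMod 2, (a.val * a.val + (0 : ZMod 2).val * (0 : ZMod 2).val : ℤ) = a.val := by
    decide
  have one_eq : (χ 1).toAdd = 0 := by rw [map_one, toAdd_one]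
  change ((χ t).toAdd.val * (χ t).toAdd.val + (χ 1).toAdd.val * (χ 1).toAdd.val : ℤ) = _
  rw [one_eq, sq_eq]

end Bockstein

section CoxeterSystem

variable {B : Type*} {W : Type*} [Group W] {M : CoxeterMatrix B} (cs : CoxeterSystem M W)

theorem exists_splitting_of_involution_lifts {E : Type*} [Group E] {p : E →* W}
    (hcentral : p.ker ≤ Subgroup.center E) (htorsion : ∀ z ∈ p.ker, z * z = 1 → z = 1)
    (hlift : ∀ i, ∃ x, p x = cs.simple i ∧ x * x = 1) :
    ∃ σ : W →* E, p.comp σ = MonoidHom.id W := by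
  choose x p_x x_sq using hlift
  have liftable : M.IsLiftable x := fun i j ↦ by
    have mem_ker : (x i * x j) ^ M i j ∈ p.ker := by
      rw [MonoidHom.mem_ker, map_pow, map_mul, p_x, p_x, cs.simple_mul_simple_pow]
    exact htorsion _ mem_ker <| mul_pow_mul_self_eq_one_of_commute (x_sq i) (x_sq j)
      (Subgroup.mem_center_iff.1 (hcentral mem_ker) (x i))
  refine ⟨cs.lift ⟨x, liftable⟩, cs.ext_simple fun i ↦ ?_⟩
  rw [MonoidHom.comp_apply, cs.lift_apply_simple, p_x, MonoidHom.id_apply]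

theorem isConj_simple_of_odd {i j : B} (hodd : Odd (M i j)) :
    IsConj (cs.simple i) (cs.simple j) := by
  obtain ⟨n, hn⟩ := hodd
  let r := cs.simple i * cs.simple j
  have semiconj : SemiconjBy (cs.simple i) r⁻¹ r := by simp [SemiconjBy, r, mul_assoc]
  have r_pow : r ^ (2 * n) * r = 1 := by
    rw [← pow_succ, ← hn, cs.simple_mul_simple_pow]
  refine isConj_iff.2 ⟨r ^ n, ?_⟩
  calc r ^ n * cs.simple i * (r ^ n)⁻¹
      = cs.simple i * (r ^ (2 * n))⁻¹ := by
        rw [← (semiconj.pow_right n).eq, mul_assoc, inv_pow, ← mul_inv_rev, ← pow_add, ← two_mul]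
    _ = cs.simple i * r := by rw [inv_eq_of_mul_eq_one_right r_pow]
    _ = cs.simple j := cs.simple_mul_simple_cancel_left i

/-- The set of conjugacy classes of reflections; its cardinality is the number `c(W)`. -/
def reflectionClasses : Set (ConjClasses W) := ConjClasses.mk '' {t | cs.IsReflection t}

/-- The conjugacy class of a simple reflection, as a class of reflections. -/
def simpleClass (i : B) : reflectionClasses cs :=
  ⟨ConjClasses.mk (cs.simple i), Set.mem_image_of_mem _ (cs.isReflection_simple i)⟩

theorem simpleClass_surjective : Function.Surjective (simpleClass cs) := by
  rintro ⟨_, _, ⟨w, i, rfl⟩, rfl⟩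
  exact ⟨i, Subtype.ext (ConjClasses.mk_eq_mk_iff_isConj.2 (isConj_iff.2 ⟨w, rfl⟩))⟩

theorem simpleClass_eq_of_odd {i j : B} (hodd : Odd (M i j)) :
    simpleClass cs i = simpleClass cs j :=
  Subtype.ext (ConjClasses.mk_eq_mk_iff_isConj.2 (isConj_simple_of_odd cs hodd))

theorem exists_character_eq_on_simple (c : reflectionClasses cs → ZMod 2) :
    ∃ χ : W →* Multiplicative (ZMod 2), ∀ i, (χ (cs.simple i)).toAdd = c (simpleClass cs i) := by
  have liftable : M.IsLiftable fun i ↦ Multiplicative.ofAdd (c (simpleClass cs i)) := fun i j ↦ by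
    rw [← ofAdd_add, ← ofAdd_nsmul, ofAdd_eq_one]
    obtain ⟨n, hn⟩ | hodd := Nat.even_or_odd (M i j)
    · rw [hn, add_nsmul, CharTwo.add_self_eq_zero]
    · rw [simpleClass_eq_of_odd cs hodd, CharTwo.add_self_eq_zero, smul_zero]
  exact ⟨cs.lift ⟨_, liftable⟩, fun i ↦ by rw [cs.lift_apply_simple, toAdd_ofAdd]⟩

theorem nonempty_unique_reflectionClasses [Nonempty B]
    (hconj : ∀ t t' : W, cs.IsReflection t → cs.IsReflection t' → IsConj t t') :
    Nonempty (Unique (reflectionClasses cs)) := by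
  refine (unique_iff_subsingleton_and_nonempty _).2 ⟨⟨?_⟩, ‹Nonempty B›.map (simpleClass cs)⟩
  rintro ⟨_, t, ht, rfl⟩ ⟨_, t', ht', rfl⟩
  exact Subtype.ext (ConjClasses.mk_eq_mk_iff_isConj.2 (hconj t t' ht ht'))

end CoxeterSystem

section CoboundaryCriterion

variable {B : Type*} {k W : Type u} [CommRing k] [Group W] {M : CoxeterMatrix B}
  (cs : CoxeterSystem M W) {A : Rep k W} [A.IsTrivial] [IsAddTorsionFree A]

theorem mem_coboundaries₂_iff_forall_even_liftSquare (f : cocycles₂ A) :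
    ⇑f ∈ coboundaries₂ A ↔ ∀ i, Even (liftSquare (cs.simple i) f) := by
  refine ⟨fun hf i ↦ even_liftSquare_of_mem_coboundaries₂ (cs.simple_mul_simple_self i) hf,
    fun heven ↦ ?_⟩
  obtain ⟨σ, hσ⟩ := exists_splitting_of_involution_lifts cs CocycleExtension.ker_proj_le_center
    (fun _ ↦ CocycleExtension.eq_one_of_mem_ker_proj_of_mul_self)
    (fun i ↦ exists_involution_lift_of_even_liftSquare (cs.simple_mul_simple_self i) (heven i))
  exact CocycleExtension.mem_coboundaries₂_of_proj_comp_eq_id hσ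

end CoboundaryCriterion

section IntegerCoefficients

variable {B : Type*} {W : Type} [Group W] {M : CoxeterMatrix B} (cs : CoxeterSystem M W)

/-- The map sending an integral 2-cocycle to the parities of its lift squares, as a function on the
conjugacy classes of reflections. The parity is taken at an arbitrary representative. -/
noncomputable def reflectionParity :
    cocycles₂ (Rep.trivial ℤ W ℤ) →ₗ[ℤ] reflectionClasses cs → ZMod 2 :=
  LinearMap.pi fun C ↦ (Int.castAddHom (ZMod 2)).toIntLinearMap ∘ₗ liftSquare (Quotient.out C.1)

theorem reflectionParity_simpleClass (f : cocycles₂ (Rep.trivial ℤ W ℤ)) (i : B) :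
    reflectionParity cs f (simpleClass cs i) = ((liftSquare (cs.simple i) f : ℤ) : ZMod 2) := by
  let t := Quotient.out (simpleClass cs i).1
  have isConj_out : IsConj (cs.simple i) t :=
    ConjClasses.mk_eq_mk_iff_isConj.1 (Quotient.out_eq (simpleClass cs i).1).symm
  have even_sub : Even (liftSquare t f - liftSquare (cs.simple i) f : ℤ) :=
    even_liftSquare_sub_of_isConj (cs.simple_mul_simple_self i) isConj_out
  exact ((ZMod.intCast_eq_intCast_iff_dvd_sub _ _ 2).2 even_sub.two_dvd).symm

theorem reflectionParity_surjective : Function.Surjective (reflectionParity cs) := by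
  intro c
  obtain ⟨χ, hχ⟩ := exists_character_eq_on_simple cs c
  refine ⟨bocksteinCocycle χ, funext fun C ↦ ?_⟩
  obtain ⟨i, rfl⟩ := simpleClass_surjective cs C
  rw [reflectionParity_simpleClass, liftSquare_bocksteinCocycle, Int.cast_natCast,
    ZMod.natCast_zmod_val, hχ]

theorem reflectionParity_eq_zero_iff (f : cocycles₂ (Rep.trivial ℤ W ℤ)) :
    reflectionParity cs f = 0 ↔ ∀ i, Even (liftSquare (cs.simple i) f) := by
  rw [funext_iff, (simpleClass_surjective cs).forall]
  refine forall_congr' fun i ↦ ?_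
  rw [reflectionParity_simpleClass, Pi.zero_apply]
  exact ZMod.intCast_eq_zero_iff_even

theorem ker_reflectionParity :
    LinearMap.ker (reflectionParity cs) = LinearMap.ker (H2π (Rep.trivial ℤ W ℤ)).hom := by
  have : IsAddTorsionFree (Rep.trivial ℤ W ℤ) := inferInstanceAs (IsAddTorsionFree ℤ)
  ext f
  calc reflectionParity cs f = 0 ↔ ∀ i, Even (liftSquare (cs.simple i) f) :=
        reflectionParity_eq_zero_iff cs f
    _ ↔ ⇑f ∈ coboundaries₂ (Rep.trivial ℤ W ℤ) :=
        (mem_coboundaries₂_iff_forall_even_liftSquare cs f).symm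
    _ ↔ H2π (Rep.trivial ℤ W ℤ) f = 0 := (H2π_eq_zero_iff f).symm

end IntegerCoefficients

theorem stmt_13_general {B : Type*} {W : Type} [Group W] {M : CoxeterMatrix B}
    (cs : CoxeterSystem M W) :
    Nonempty (H2 (Rep.trivial ℤ W ℤ) ≃+ (reflectionClasses cs → ZMod 2)) := by
  have surjective_H2π : Function.Surjective (H2π (Rep.trivial ℤ W ℤ)).hom :=
    (ModuleCat.epi_iff_surjective _).1 inferInstance
  exact ⟨((LinearMap.quotKerEquivOfSurjective _ surjective_H2π).symm ≪≫ₗ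
    Submodule.quotEquivOfEq _ _ (ker_reflectionParity cs).symm ≪≫ₗ
    LinearMap.quotKerEquivOfSurjective _ (reflectionParity_surjective cs)).toAddEquiv⟩

/-- If all reflections of the Coxeter group `W` are conjugate in `W` (that is, `c(W) = 1`),
then the second group cohomology `H²(W, ℤ)` with trivial coefficients is isomorphic to
`ℤ/2`. -/
theorem stmt_13 {B : Type} [Fintype B] [Nonempty B] {W : Type} [Group W]
    {M : CoxeterMatrix B} (cs : CoxeterSystem M W)
    (h1 : ∀ t t' : W, cs.IsReflection t → cs.IsReflection t' → IsConj t t') :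
    Nonempty (groupCohomology.H2 (Rep.trivial ℤ W ℤ) ≃+ ZMod 2) := by
  obtain ⟨_⟩ := nonempty_unique_reflectionClasses cs h1
  exact (stmt_13_general cs).map fun e ↦ e.trans (AddEquiv.piUnique _)
end
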